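/- arXiv:2603.10530 — 3 statements merged into one kernel-verified Lean document; each statement's English description precedes it below -/
import Mathlib

section
/- Let n ≥ 1 and let Ω ⊂ ℂ^n be a bounded open strictly convex domain with smooth boundary. Let u : Ω → ℝ be a smooth strictly plurisubharmonic function solving the Kähler–Einstein potential equation det(u_{ij̄}) = e^{(n+1)u} in Ω with u(z) → +∞ as z → ∂Ω, and assume (as Cheng–Yau's existence theorem provides) that v = e^{-u} extends to a C² function on the closure of Ω with v = 0 on ∂Ω. Then the real Hessian D²_ℝ u (the Hessian of u viewed as a function on ℝ^{2n}) is positive definite at every point of Ω; that is, u is strictly convex. -/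
open Complex Matrix
open scoped ComplexOrder

noncomputable section

/-- Wirtinger derivative `∂/∂z_j` of a complex-valued function on `ℂⁿ`. -/
def wdz {n : ℕ} (f : (Fin n → ℂ) → ℂ) (j : Fin n) (z : Fin n → ℂ) : ℂ :=
  (fderiv ℝ f z (Pi.single j 1) - Complex.I * fderiv ℝ f z (Pi.single j Complex.I)) / 2

/-- Wirtinger derivative `∂/∂z̄_j` of a complex-valued function on `ℂⁿ`. -/
def wdzbar {n : ℕ} (f : (Fin n → ℂ) → ℂ) (j : Fin n) (z : Fin n → ℂ) : ℂ :=
  (fderiv ℝ f z (Pi.single j 1) + Complex.I * fderiv ℝ f z (Pi.single j Complex.I)) / 2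

/-- A real-valued function on `ℂⁿ` viewed as complex-valued. -/
def cplx {n : ℕ} (u : (Fin n → ℂ) → ℝ) : (Fin n → ℂ) → ℂ := fun z => (u z : ℂ)

/-- The complex Hessian `A = (u_{ij̄}) = (∂_i ∂_{j̄} u)`. -/
def hessA {n : ℕ} (u : (Fin n → ℂ) → ℝ) (z : Fin n → ℂ) : Matrix (Fin n) (Fin n) ℂ :=
  Matrix.of fun i j => wdz (wdzbar (cplx u) j) i z

/-- The matrix `B = (u_{ij}) = (∂_i ∂_j u)`. -/
def hessB {n : ℕ} (u : (Fin n → ℂ) → ℝ) (z : Fin n → ℂ) : Matrix (Fin n) (Fin n) ℂ :=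
  Matrix.of fun i j => wdz (wdz (cplx u) j) i z

/-- `u^{ij̄}`, the entries of the inverse of the complex Hessian, with the convention
`∑_j u^{ij̄} u_{kj̄} = δ_{ik}`. -/
def uInv {n : ℕ} (u : (Fin n → ℂ) → ℝ) (z : Fin n → ℂ) (i j : Fin n) : ℂ :=
  (hessA u z)⁻¹ j i

/-- Entrywise Wirtinger derivative `∂_i` of a matrix-valued function. -/
def mwdz {n : ℕ} (F : (Fin n → ℂ) → Matrix (Fin n) (Fin n) ℂ) (i : Fin n) (z : Fin n → ℂ) :
    Matrix (Fin n) (Fin n) ℂ :=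
  Matrix.of fun p q => wdz (fun w => F w p q) i z

/-- Entrywise Wirtinger derivative `∂_{j̄}` of a matrix-valued function. -/
def mwdzbar {n : ℕ} (F : (Fin n → ℂ) → Matrix (Fin n) (Fin n) ℂ) (j : Fin n) (z : Fin n → ℂ) :
    Matrix (Fin n) (Fin n) ℂ :=
  Matrix.of fun p q => wdzbar (fun w => F w p q) j z

/-- Entrywise complex conjugate of a matrix. -/
def mconj {n : ℕ} (M : Matrix (Fin n) (Fin n) ℂ) : Matrix (Fin n) (Fin n) ℂ :=
  M.map (starRingEnd ℂ)

/-- The real coordinate directions `x_1, …, x_n, y_1, …, y_n` of `ℂⁿ`. -/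
def realDir {n : ℕ} : (Fin n ⊕ Fin n) → (Fin n → ℂ)
  | Sum.inl j => Pi.single j 1
  | Sum.inr j => Pi.single j Complex.I

/-- The real Hessian of `u : ℂⁿ → ℝ` in the coordinates `(x_1,…,x_n,y_1,…,y_n)`. -/
def realHess {n : ℕ} (u : (Fin n → ℂ) → ℝ) (z : Fin n → ℂ) :
    Matrix (Fin n ⊕ Fin n) (Fin n ⊕ Fin n) ℝ :=
  Matrix.of fun a b => fderiv ℝ (fun w => fderiv ℝ u w (realDir b)) z (realDir a)

/-!
Convexity of `u` is a maximum principle for the two-point function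
`2 u(p + t (z - p)) - u(z + k) - u(z - k)` with `t < 1`, the dilation keeping a positive maximum
away from the boundary. At a maximum the second variation is tested in complex directions that
move the endpoints by `P⁻¹ w` and `Q⁻¹ w`, where `P` and `Q` are the complex Hessians there. The
arithmetic-geometric mean inequality for determinants then bounds the Hessian determinant at the
dilated midpoint by the geometric mean of those at the endpoints; through the equation this
bounds the two-point function by a multiple of `-log t`, and `t → 1`.

For strictness let `z₁` minimize `u - |z|²`, let `ψ` be the Bregman distance of `u` from `z₁`, and
compare `u(z + k) + u(z - k) - 2 u(z)` with `δ (exp (-α ψ(z)) - exp (-α T)) |k|²`. Near `z₁` the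
Hessian of `u` is positive and a small `δ` suffices. Away from `z₁` the differential of `ψ` does
not vanish, by convexity of `u`, so for large `α` the term `α² |∂ψ|²` of the same second variation
excludes a positive maximum of the difference, whatever `δ`. Hence the Hessian is positive on
`{ψ < T}`, for every `T`.
-/

section RealInnerProduct

variable {ι : Type*} [Fintype ι]

/-- The Euclidean inner product `Re ∑ j, k̄_j d_j` of `ℂⁿ = ℝ²ⁿ`; the norm of the function type
`ι → ℂ` is the supremum norm, so this is not an instance of `inner`. -/
def reDot (k d : ι → ℂ) : ℝ := (star k ⬝ᵥ d).re

theorem reDot_add_right (k d e : ι → ℂ) : reDot k (d + e) = reDot k d + reDot k e := by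
  simp [reDot]

theorem reDot_sub_right (k d e : ι → ℂ) : reDot k (d - e) = reDot k d - reDot k e := by
  simp [reDot]

theorem reDot_smul_right (t : ℝ) (k d : ι → ℂ) : reDot k (t • d) = t * reDot k d := by
  simp [reDot]

theorem reDot_comm (k d : ι → ℂ) : reDot k d = reDot d k := by
  simp only [reDot, dotProduct, Complex.re_sum]
  exact Finset.sum_congr rfl fun j _ => by simp; ring

theorem reDot_add_left (k l d : ι → ℂ) : reDot (k + l) d = reDot k d + reDot l d := by
  simp only [reDot_comm _ d, reDot_add_right]

theorem reDot_smul_left (t : ℝ) (k d : ι → ℂ) : reDot (t • k) d = t * reDot k d := by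
  simp only [reDot_comm _ d, reDot_smul_right]

theorem reDot_I_smul_I_smul (k d : ι → ℂ) : reDot (I • k) (I • d) = reDot k d := by
  simp [reDot]

theorem reDot_self (k : ι → ℂ) : reDot k k = ∑ j, ‖k j‖ ^ 2 := by
  simp only [reDot, dotProduct, Complex.re_sum]
  exact Finset.sum_congr rfl fun j _ => by simp [Complex.sq_norm, Complex.normSq_apply]

theorem reDot_self_nonneg (k : ι → ℂ) : 0 ≤ reDot k k := by
  rw [reDot_self]; positivity

theorem reDot_self_pos {k : ι → ℂ} (hk : k ≠ 0) : 0 < reDot k k := by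
  obtain ⟨j, hj⟩ := Function.ne_iff.1 hk
  rw [reDot_self]
  exact Finset.sum_pos' (fun _ _ => by positivity)
    ⟨j, Finset.mem_univ _, pow_pos (norm_pos_iff.2 hj) 2⟩

/-- This is `0 ≤ |d - (a - b I) k|²`. -/
theorem two_mul_add_mul_reDot_I_smul_le (a b : ℝ) (k d : ι → ℂ) :
    2 * (a * reDot k d + b * reDot k (I • d)) ≤ (a ^ 2 + b ^ 2) * reDot k k + reDot d d := by
  simp only [reDot, dotProduct, Complex.re_sum, Finset.mul_sum, ← Finset.sum_add_distrib]
  refine Finset.sum_le_sum fun j _ => ?_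
  simp only [Pi.star_apply, Pi.smul_apply, star_def, smul_eq_mul, mul_re, mul_im, conj_re, conj_im,
    I_re, I_im]
  linarith [sq_nonneg ((d j).re - (a * (k j).re + b * (k j).im)),
    sq_nonneg ((d j).im - (a * (k j).im - b * (k j).re))]

theorem norm_sq_le_reDot_self (k : ι → ℂ) : ‖k‖ ^ 2 ≤ reDot k k := by
  have h : ‖k‖ ≤ √(reDot k k) := by
    refine (pi_norm_le_iff_of_nonneg (Real.sqrt_nonneg _)).2 fun j => Real.le_sqrt_of_sq_le ?_
    rw [reDot_self]
    exact Finset.single_le_sum (f := fun j => ‖k j‖ ^ 2) (fun _ _ => by positivity)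
      (Finset.mem_univ j)
  exact (Real.le_sqrt (norm_nonneg k) (reDot_self_nonneg k)).1 h

theorem continuous_reDot_self : Continuous fun k : ι → ℂ => reDot k k := by
  simp only [reDot_self]
  fun_prop

end RealInnerProduct

section PositiveMatrices

variable {ι : Type*} [Fintype ι]

theorem posSemidef_of_isHermitian_of_reDot_nonneg {M : Matrix ι ι ℂ} (hM : M.IsHermitian)
    (h : ∀ w, 0 ≤ reDot w (M *ᵥ w)) : M.PosSemidef :=
  .of_dotProduct_mulVec_nonneg hM fun w =>
    Complex.le_def.2 ⟨h w, (hM.im_star_dotProduct_mulVec_self w).symm⟩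

theorem reDot_mulVec_conj {S : Matrix ι ι ℂ} (hS : S.IsHermitian) (G : Matrix ι ι ℂ)
    (w : ι → ℂ) : reDot w ((S * G * S) *ᵥ w) = reDot (S *ᵥ w) (G *ᵥ S *ᵥ w) := by
  rw [reDot, reDot, star_mulVec, hS.eq, ← dotProduct_mulVec, mulVec_mulVec, mulVec_mulVec]

theorem reDot_self_le_of_reDot_sub_mulVec_le {A B : Matrix ι ι ℂ} {k w s d : ι → ℂ} {L : ℝ}
    (hL : reDot ((A - B) *ᵥ w) ((A - B) *ᵥ w) ≤ 4 * L * reDot k k * reDot w w)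
    (hA : s + d = A *ᵥ w) (hB : s - d = B *ᵥ w) : reDot d d ≤ reDot k k * (L * reDot w w) := by
  rw [sub_mulVec, ← hA, ← hB, show s + d - (s - d) = (2 : ℝ) • d by module, reDot_smul_left,
    reDot_smul_right] at hL
  linarith

open scoped MatrixOrder in
theorem exists_eq_conjTranspose_mul_self_of_posSemidef {S : Matrix ι ι ℂ} (hS : S.PosSemidef) :
    ∃ B : Matrix ι ι ℂ, S = Bᴴ * B := by
  classical
  exact CStarAlgebra.nonneg_iff_eq_star_mul_self.mp hS.nonneg

theorem re_trace_mul_nonneg {S M : Matrix ι ι ℂ} (hS : S.PosSemidef) (hM : M.PosSemidef) :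
    0 ≤ (S * M).trace.re := by
  obtain ⟨B, rfl⟩ := exists_eq_conjTranspose_mul_self_of_posSemidef hS
  rw [← trace_mul_cycle]
  exact (Complex.le_def.1 (hM.mul_mul_conjTranspose_same B).trace_nonneg).1

theorem re_trace_mul_pos {S M : Matrix ι ι ℂ} (hS : S.PosDef) (hM : M.PosSemidef) (hM0 : M ≠ 0) :
    0 < (S * M).trace.re := by
  classical
  obtain ⟨B, rfl⟩ := exists_eq_conjTranspose_mul_self_of_posSemidef hS.posSemidef
  have hB : IsUnit B := isUnit_of_mul_isUnit_right hS.isUnit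
  have hpsd := hM.mul_mul_conjTranspose_same B
  rw [← trace_mul_cycle]
  refine (Complex.lt_def.1 (hpsd.trace_nonneg.lt_of_ne fun h0 => hM0 ?_)).1
  have hzero : B * M * star B = 0 := hpsd.trace_eq_zero_iff.1 h0.symm
  rwa [hB.star.mul_left_eq_zero, hB.mul_right_eq_zero] at hzero

variable [DecidableEq ι]

theorem re_det_le_exp_re_trace_sub_card {P : Matrix ι ι ℂ} (hP : P.PosSemidef) :
    P.det.re ≤ Real.exp (P.trace.re - Fintype.card ι) := by
  have hdet : P.det.re = ∏ i, hP.isHermitian.eigenvalues i := by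
    rw [hP.isHermitian.det_eq_prod_eigenvalues]
    exact_mod_cast Complex.ofReal_re _
  have htrace : P.trace.re - Fintype.card ι = ∑ i, (hP.isHermitian.eigenvalues i - 1) := by
    rw [hP.isHermitian.trace_eq_sum_eigenvalues]
    simp
  rw [hdet, htrace, Real.exp_sum]
  refine Finset.prod_le_prod (fun i _ => hP.eigenvalues_nonneg i) fun i _ => ?_
  linarith [Real.add_one_le_exp (hP.isHermitian.eigenvalues i - 1)]

theorem re_det_mul_le_exp_re_trace_sub_card {G S : Matrix ι ι ℂ} (hG : G.PosSemidef)
    (hS : S.PosSemidef) : (G * S).det.re ≤ Real.exp ((G * S).trace.re - Fintype.card ι) := by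
  obtain ⟨B, rfl⟩ := exists_eq_conjTranspose_mul_self_of_posSemidef hS
  have hdet : (G * (Bᴴ * B)).det = (B * G * Bᴴ).det := by
    simp only [det_mul]; ring
  have htrace : (G * (Bᴴ * B)).trace = (B * G * Bᴴ).trace := by
    rw [trace_mul_comm, ← trace_mul_cycle]
  rw [hdet, htrace]
  exact re_det_le_exp_re_trace_sub_card (hG.mul_mul_conjTranspose_same B)

theorem isUnit_det_of_posDef {P : Matrix ι ι ℂ} (hP : P.PosDef) : IsUnit P.det :=
  (isUnit_iff_isUnit_det _).1 hP.isUnit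

theorem ofReal_re_det {P : Matrix ι ι ℂ} (hP : P.PosDef) : P.det = (P.det.re : ℂ) :=
  Complex.ext rfl (Complex.lt_def.1 hP.det_pos).2.symm

theorem re_det_pos {P : Matrix ι ι ℂ} (hP : P.PosDef) : 0 < P.det.re :=
  (Complex.lt_def.1 hP.det_pos).1

theorem re_det_mul_le_exp_neg_re_trace_inv_mul {G S Y : Matrix ι ι ℂ} (hG : G.PosSemidef)
    (hS : S.PosDef) (h : (S - S * G * S - Y).PosSemidef) :
    (G * S).det.re ≤ Real.exp (-(S⁻¹ * Y).trace.re) := by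
  refine (re_det_mul_le_exp_re_trace_sub_card hG hS.posSemidef).trans (Real.exp_le_exp.2 ?_)
  have hu := isUnit_det_of_posDef hS
  have hexpand : S⁻¹ * (S - S * G * S - Y) = 1 - G * S - S⁻¹ * Y := by
    rw [mul_sub, mul_sub, nonsing_inv_mul _ hu, Matrix.mul_assoc,
      nonsing_inv_mul_cancel_left _ _ hu]
  have htrace := re_trace_mul_nonneg hS.inv.posSemidef h
  rw [hexpand, trace_sub, trace_sub, trace_one] at htrace
  simp only [sub_re, natCast_re] at htrace
  linarith

/-- The matrix average `(P⁻¹ + Q⁻¹) / 2`: the inverse of the harmonic mean of `P` and `Q`. -/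
def meanInv (P Q : Matrix ι ι ℂ) : Matrix ι ι ℂ := (2⁻¹ : ℝ) • (P⁻¹ + Q⁻¹)

theorem posDef_meanInv {P Q : Matrix ι ι ℂ} (hP : P.PosDef) (hQ : Q.PosDef) :
    (meanInv P Q).PosDef :=
  (hP.inv.add hQ.inv).smul (by norm_num)

theorem re_det_mul_re_det_le_sq {P Q : Matrix ι ι ℂ} (hP : P.PosDef) (hQ : Q.PosDef) :
    P.det.re * Q.det.re ≤ ((2⁻¹ : ℝ) • (P + Q)).det.re ^ 2 := by
  set S := (2⁻¹ : ℝ) • (P + Q) with hSdef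
  have hS : S.PosDef := (hP.add hQ).smul (by norm_num)
  have hdet : ∀ {R : Matrix ι ι ℂ}, R.PosDef →
      R.det.re / S.det.re ≤ Real.exp ((R * S⁻¹).trace.re - Fintype.card ι) := fun {R} hR => by
    refine le_of_eq_of_le ?_
      (re_det_mul_le_exp_re_trace_sub_card hR.posSemidef hS.inv.posSemidef)
    rw [det_mul, det_nonsing_inv, Ring.inverse_eq_inv', ofReal_re_det hR, ofReal_re_det hS,
      ← ofReal_inv, ← ofReal_mul, ofReal_re, ofReal_re, ofReal_re, div_eq_mul_inv]
  have htrace : (P * S⁻¹).trace.re + (Q * S⁻¹).trace.re = 2 * Fintype.card ι := by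
    have hsum : P + Q = (2 : ℝ) • S := by rw [hSdef, smul_smul]; norm_num
    rw [← Complex.add_re, ← trace_add, ← add_mul, hsum, Matrix.smul_mul,
      mul_nonsing_inv _ (isUnit_det_of_posDef hS)]
    simp
  have hS0 : 0 < S.det.re := re_det_pos hS
  rw [← div_le_one (pow_pos hS0 2)]
  calc P.det.re * Q.det.re / S.det.re ^ 2
      = P.det.re / S.det.re * (Q.det.re / S.det.re) := by ring
    _ ≤ _ := mul_le_mul (hdet hP) (hdet hQ)
        (div_nonneg (re_det_pos hQ).le hS0.le) (Real.exp_pos _).le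
    _ = 1 := by rw [← Real.exp_add, Real.exp_eq_one_iff]; linarith

theorem exp_neg_le_re_det_meanInv {P Q : Matrix ι ι ℂ} {a b : ℝ} (hP : P.PosDef)
    (hQ : Q.PosDef) (ha : P.det = (Real.exp a : ℂ)) (hb : Q.det = (Real.exp b : ℂ)) :
    Real.exp (-(a + b) / 2) ≤ (meanInv P Q).det.re := by
  have hinv : ∀ {R : Matrix ι ι ℂ} {r : ℝ}, R.det = (Real.exp r : ℂ) →
      (R⁻¹).det.re = Real.exp (-r) := fun hr => by
    rw [det_nonsing_inv, Ring.inverse_eq_inv', hr, ← ofReal_inv, ofReal_re, Real.exp_neg]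
  refine (sq_le_sq₀ (Real.exp_pos _).le (re_det_pos (posDef_meanInv hP hQ)).le).1 ?_
  calc Real.exp (-(a + b) / 2) ^ 2 = (P⁻¹).det.re * (Q⁻¹).det.re := by
        rw [hinv ha, hinv hb, ← Real.exp_add, ← Real.exp_nat_mul]
        congr 1
        push_cast
        ring
    _ ≤ _ := re_det_mul_re_det_le_sq hP.inv hQ.inv

theorem reDot_inv_mulVec {P : Matrix ι ι ℂ} (hP : P.PosDef) (w : ι → ℂ) :
    reDot (P⁻¹ *ᵥ w) (P *ᵥ P⁻¹ *ᵥ w) = reDot w (P⁻¹ *ᵥ w) := by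
  rw [mulVec_mulVec, mul_nonsing_inv _ (isUnit_det_of_posDef hP), one_mulVec, reDot_comm]

/-- In the maximum principle `P⁻¹ *ᵥ w` and `Q⁻¹ *ᵥ w` are the displacements of two endpoints, and
`meanInv P Q *ᵥ w` is the resulting displacement of their midpoint. -/
theorem add_re_trace_meanInv_inv_mul_le {P Q G Y : Matrix ι ι ℂ} {a b g : ℝ} (hP : P.PosDef)
    (hQ : Q.PosDef) (hG : G.PosDef) (hY : Y.IsHermitian) (ha : P.det = (Real.exp a : ℂ))
    (hb : Q.det = (Real.exp b : ℂ)) (hg : G.det = (Real.exp g : ℂ))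
    (h : ∀ w, reDot (meanInv P Q *ᵥ w) (G *ᵥ meanInv P Q *ᵥ w) + reDot w (Y *ᵥ w) ≤
      (reDot (P⁻¹ *ᵥ w) (P *ᵥ P⁻¹ *ᵥ w) + reDot (Q⁻¹ *ᵥ w) (Q *ᵥ Q⁻¹ *ᵥ w)) / 2) :
    g + ((meanInv P Q)⁻¹ * Y).trace.re ≤ (a + b) / 2 := by
  set S := meanInv P Q with hSdef
  have hS : S.PosDef := posDef_meanInv hP hQ
  have hpsd : (S - S * G * S - Y).PosSemidef := by
    refine posSemidef_of_isHermitian_of_reDot_nonneg ((hS.isHermitian.sub ?_).sub hY) fun w => ?_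
    · simpa only [hS.isHermitian.eq] using isHermitian_conjTranspose_mul_mul S hG.isHermitian
    · have hSw : reDot w (S *ᵥ w) = (reDot w (P⁻¹ *ᵥ w) + reDot w (Q⁻¹ *ᵥ w)) / 2 := by
        rw [hSdef, meanInv, smul_mulVec, add_mulVec, reDot_smul_right, reDot_add_right]
        ring
      have hw := h w
      rw [reDot_inv_mulVec hP, reDot_inv_mulVec hQ, ← hSw] at hw
      rw [sub_mulVec, sub_mulVec, reDot_sub_right, reDot_sub_right,
        reDot_mulVec_conj hS.isHermitian]
      linarith
  have hdet := re_det_mul_le_exp_neg_re_trace_inv_mul hG.posSemidef hS hpsd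
  rw [det_mul, hg, re_ofReal_mul] at hdet
  have hexp : Real.exp (g - (a + b) / 2) ≤ Real.exp (-(S⁻¹ * Y).trace.re) :=
    calc Real.exp (g - (a + b) / 2) = Real.exp g * Real.exp (-(a + b) / 2) := by
          rw [← Real.exp_add]; congr 1; ring
      _ ≤ Real.exp g * S.det.re := by gcongr; exact exp_neg_le_re_det_meanInv hP hQ ha hb
      _ ≤ _ := hdet
  linarith [Real.exp_le_exp.1 hexp]

end PositiveMatrices

section SecondOrderJets

/-- `φ` has value `a`, first derivative `b` and second derivative `c` at `0`, the first derivative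
being defined near `0`. -/
def HasJet2 (φ : ℝ → ℝ) (a b c : ℝ) : Prop :=
  φ 0 = a ∧ ∃ φ' : ℝ → ℝ, (∀ᶠ t in nhds (0 : ℝ), HasDerivAt φ (φ' t) t) ∧ φ' 0 = b ∧
    HasDerivAt φ' c 0

namespace HasJet2

variable {φ χ : ℝ → ℝ} {a b c a' b' c' : ℝ}

theorem congr (h : HasJet2 φ a b c) (hφ : ∀ t, χ t = φ t) (ha : a = a') (hb : b = b')
    (hc : c = c') : HasJet2 χ a' b' c' := by
  obtain rfl : χ = φ := funext hφ
  subst ha hb hc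
  exact h

theorem add (h : HasJet2 φ a b c) (h' : HasJet2 χ a' b' c') :
    HasJet2 (fun t => φ t + χ t) (a + a') (b + b') (c + c') := by
  obtain ⟨rfl, φ', hφ, rfl, hφ'⟩ := h
  obtain ⟨rfl, χ', hχ, rfl, hχ'⟩ := h'
  refine ⟨rfl, fun t => φ' t + χ' t, ?_, rfl, hφ'.add hχ'⟩
  filter_upwards [hφ, hχ] with t ht ht' using ht.add ht'

theorem const_mul (h : HasJet2 φ a b c) (r : ℝ) :
    HasJet2 (fun t => r * φ t) (r * a) (r * b) (r * c) := by
  obtain ⟨rfl, φ', hφ, rfl, hφ'⟩ := h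
  refine ⟨rfl, fun t => r * φ' t, ?_, rfl, hφ'.const_mul r⟩
  filter_upwards [hφ] with t ht using ht.const_mul r

theorem const (r : ℝ) : HasJet2 (fun _ => r) r 0 0 :=
  ⟨rfl, fun _ => 0, .of_forall fun t => hasDerivAt_const t r, rfl, hasDerivAt_const _ _⟩

theorem id : HasJet2 (fun t => t) 0 1 0 :=
  ⟨rfl, fun _ => 1, .of_forall hasDerivAt_id, rfl, hasDerivAt_const _ _⟩

theorem mul (h : HasJet2 φ a b c) (h' : HasJet2 χ a' b' c') :
    HasJet2 (fun t => φ t * χ t) (a * a') (b * a' + a * b')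
      (c * a' + 2 * (b * b') + a * c') := by
  obtain ⟨rfl, φ', hφ, rfl, hφ'⟩ := h
  obtain ⟨rfl, χ', hχ, rfl, hχ'⟩ := h'
  refine ⟨rfl, fun t => φ' t * χ t + φ t * χ' t, ?_, rfl, ?_⟩
  · filter_upwards [hφ, hχ] with t ht ht' using ht.mul ht'
  · refine ((hφ'.mul hχ.self_of_nhds).add (hφ.self_of_nhds.mul hχ')).congr_deriv ?_
    ring

theorem exp (h : HasJet2 φ a b c) :
    HasJet2 (fun t => Real.exp (φ t)) (Real.exp a) (Real.exp a * b)
      (Real.exp a * (b ^ 2 + c)) := by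
  obtain ⟨rfl, φ', hφ, rfl, hφ'⟩ := h
  refine ⟨rfl, fun t => Real.exp (φ t) * φ' t, ?_, rfl, ?_⟩
  · filter_upwards [hφ] with t ht using ht.exp
  · refine (hφ.self_of_nhds.exp.mul hφ').congr_deriv ?_
    ring

theorem eq_zero_of_isLocalMax (h : HasJet2 φ a b c) (hmax : IsLocalMax φ 0) : b = 0 := by
  obtain ⟨-, φ', hφ, rfl, -⟩ := h
  exact hmax.hasDerivAt_eq_zero hφ.self_of_nhds

theorem nonpos_of_isLocalMax (h : HasJet2 φ a b c) (hmax : IsLocalMax φ 0) : c ≤ 0 := by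
  obtain ⟨rfl, φ', hφ, rfl, hφ'⟩ := h
  have hderiv2 : deriv (deriv φ) 0 = c := by
    rw [Filter.EventuallyEq.deriv_eq (hφ.mono fun t ht => ht.deriv), hφ'.deriv]
  by_contra! hc
  have hmin : IsLocalMin φ 0 := isLocalMin_of_deriv_deriv_pos (hderiv2.symm ▸ hc)
    hmax.deriv_eq_zero hφ.self_of_nhds.continuousAt
  have hconst : φ =ᶠ[nhds 0] fun _ => φ 0 := by
    filter_upwards [hmax, hmin] with t h1 h2 using le_antisymm h1 h2
  rw [hconst.deriv.deriv_eq, deriv_const', deriv_const] at hderiv2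
  exact hc.ne hderiv2

end HasJet2

/-- The second derivative of `f` at `z`, as a bilinear form. -/
abbrev fderiv2 {E : Type*} [NormedAddCommGroup E] [NormedSpace ℝ E] (f : E → ℝ) (z : E) :
    E →L[ℝ] E →L[ℝ] ℝ :=
  fderiv ℝ (fderiv ℝ f) z

variable {E : Type*} [NormedAddCommGroup E] [NormedSpace ℝ E] {f : E → ℝ} {z : E}

theorem hasFDerivAt_fderiv (hf : ContDiffAt ℝ 2 f z) :
    HasFDerivAt (fderiv ℝ f) (fderiv2 f z) z :=
  ((hf.fderiv_right (m := 1) (by norm_num)).differentiableAt (by simp)).hasFDerivAt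

theorem eventually_differentiableAt (hf : ContDiffAt ℝ 2 f z) :
    ∀ᶠ y in nhds z, DifferentiableAt ℝ f y := by
  filter_upwards [hf.eventually (by simp)] with y hy using hy.differentiableAt (by simp)

theorem hasDerivAt_add_smul (z w : E) (t : ℝ) : HasDerivAt (fun t : ℝ => z + t • w) w t := by
  simpa using ((hasDerivAt_id t).smul_const w).const_add z

theorem hasDerivAt_comp_add_smul {w : E} {t : ℝ} (hf : DifferentiableAt ℝ f (z + t • w)) :
    HasDerivAt (fun t : ℝ => f (z + t • w)) (fderiv ℝ f (z + t • w) w) t :=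
  hf.hasFDerivAt.comp_hasDerivAt t (hasDerivAt_add_smul z w t)

theorem hasDerivAt_fderiv_add_smul {w : E} {t : ℝ} (hf : ContDiffAt ℝ 2 f (z + t • w)) :
    HasDerivAt (fun t : ℝ => fderiv ℝ f (z + t • w) w) (fderiv2 f (z + t • w) w w) t :=
  (ContinuousLinearMap.apply ℝ ℝ w).hasFDerivAt.comp_hasDerivAt t
    ((hasFDerivAt_fderiv hf).comp_hasDerivAt t (hasDerivAt_add_smul z w t))

theorem hasJet2_comp_add_smul (hf : ContDiffAt ℝ 2 f z) (w : E) :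
    HasJet2 (fun t => f (z + t • w)) (f z) (fderiv ℝ f z w) (fderiv2 f z w w) := by
  have hline : Filter.Tendsto (fun t : ℝ => z + t • w) (nhds 0) (nhds z) := by
    simpa using (hasDerivAt_add_smul z w 0).continuousAt.tendsto
  refine ⟨by simp, fun t => fderiv ℝ f (z + t • w) w, ?_, by simp, ?_⟩
  · filter_upwards [hline.eventually (eventually_differentiableAt hf)] with t ht
    exact hasDerivAt_comp_add_smul ht
  · simpa using hasDerivAt_fderiv_add_smul (z := z) (w := w) (t := 0) (by simpa using hf)

theorem hasJet2_reDot_self {ι : Type*} [Fintype ι] (k d : ι → ℂ) :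
    HasJet2 (fun t : ℝ => reDot (k + t • d) (k + t • d)) (reDot k k) (2 * reDot k d)
      (2 * reDot d d) := by
  refine ((HasJet2.const (reDot k k)).add ((HasJet2.id.const_mul (2 * reDot k d)).add
    ((HasJet2.id.mul .id).const_mul (reDot d d)))).congr (fun t => ?_) ?_ ?_ ?_
  · simp only [reDot_add_left, reDot_add_right, reDot_smul_left, reDot_smul_right, reDot_comm d k]
    ring
  all_goals ring

end SecondOrderJets

section SecondDifferences

variable {E : Type*} [NormedAddCommGroup E] [NormedSpace ℝ E] {f : E → ℝ} {s : Set E}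

/-- The symmetric second difference of `f` at `z` in the direction `k`. It is nonnegative for all
`z` and `k` exactly when `f` is midpoint convex. -/
def secondDiff (f : E → ℝ) (z k : E) : ℝ := f (z + k) + f (z - k) - 2 * f z

theorem secondDiff_smul_le {z k : E} {t : ℝ} (hf : ConvexOn ℝ s f) (hz : z ∈ s)
    (hadd : z + k ∈ s) (hsub : z - k ∈ s) (ht0 : 0 ≤ t) (ht1 : t ≤ 1) :
    secondDiff f z (t • k) ≤ t * secondDiff f z k := by
  have hconv : ∀ {y}, y ∈ s → f ((1 - t) • z + t • y) ≤ (1 - t) * f z + t * f y := fun hy =>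
    hf.2 hz hy (sub_nonneg.2 ht1) ht0 (sub_add_cancel 1 t)
  have h1 := hconv hadd
  have h2 := hconv hsub
  rw [show (1 - t) • z + t • (z + k) = z + t • k by module] at h1
  rw [show (1 - t) • z + t • (z - k) = z - t • k by module] at h2
  unfold secondDiff
  linarith

theorem hasJet2_secondDiff {z k s d : E} (hz : ContDiffAt ℝ 2 f z)
    (hadd : ContDiffAt ℝ 2 f (z + k)) (hsub : ContDiffAt ℝ 2 f (z - k)) :
    HasJet2 (fun t => secondDiff f (z + t • s) (k + t • d)) (secondDiff f z k)
      (fderiv ℝ f (z + k) (s + d) + fderiv ℝ f (z - k) (s - d) - 2 * fderiv ℝ f z s)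
      (fderiv2 f (z + k) (s + d) (s + d) + fderiv2 f (z - k) (s - d) (s - d)
        - 2 * fderiv2 f z s s) := by
  refine (((hasJet2_comp_add_smul hadd (s + d)).add (hasJet2_comp_add_smul hsub (s - d))).add
    ((hasJet2_comp_add_smul hz s).const_mul (-2))).congr (fun t => ?_) ?_ ?_ ?_
  · rw [secondDiff, show z + t • s + (k + t • d) = z + k + t • (s + d) by module,
      show z + t • s - (k + t • d) = z - k + t • (s - d) by module]
    ring
  · unfold secondDiff; ring
  all_goals ring

theorem le_fderiv2_of_mul_sq_le_secondDiff {z k : E} {a : ℝ} (hf : ContDiffAt ℝ 2 f z)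
    (h : ∀ᶠ t : ℝ in nhds 0, a * t ^ 2 ≤ secondDiff f z (t • k)) : a ≤ fderiv2 f z k k := by
  have hjet := ((HasJet2.id.mul .id).const_mul a).add
    ((hasJet2_secondDiff (k := 0) (s := 0) (d := k) hf (by simpa) (by simpa)).const_mul (-1))
  have hle := hjet.nonpos_of_isLocalMax (by
    filter_upwards [h] with t ht
    simp only [smul_zero, add_zero, zero_add, zero_smul, mul_zero]
    simp only [secondDiff, add_zero, sub_zero] at ht ⊢
    linarith)
  simp only [add_zero, sub_zero, zero_add, zero_sub, map_neg, _root_.neg_apply, neg_neg, map_zero,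
    mul_zero] at hle
  linarith

theorem convexOn_comp_add_smul_sub {z k : E} {a : ℝ} {S : Set ℝ} (hS : Convex ℝ S)
    (hf : ∀ t ∈ S, ContDiffAt ℝ 2 f (z + t • k))
    (ha : ∀ t ∈ S, a ≤ fderiv2 f (z + t • k) k k) :
    ConvexOn ℝ S fun t => f (z + t • k) - a / 2 * t ^ 2 := by
  have hderiv : ∀ t ∈ S, HasDerivAt (fun t => f (z + t • k) - a / 2 * t ^ 2)
      (fderiv ℝ f (z + t • k) k - a * t) t := fun t ht => by
    refine ((hasDerivAt_comp_add_smul ((hf t ht).differentiableAt (by simp))).sub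
      ((hasDerivAt_pow 2 t).const_mul (a / 2))).congr_deriv ?_
    ring
  have hderiv2 : ∀ t ∈ S, HasDerivAt (fun t => fderiv ℝ f (z + t • k) k - a * t)
      (fderiv2 f (z + t • k) k k - a) t := fun t ht => by
    refine ((hasDerivAt_fderiv_add_smul (hf t ht)).sub
      ((hasDerivAt_id t).const_mul a)).congr_deriv ?_
    ring
  exact convexOn_of_hasDerivWithinAt2_nonneg hS
    (fun t ht => (hderiv t ht).continuousAt.continuousWithinAt)
    (fun t ht => (hderiv t (interior_subset ht)).hasDerivWithinAt)
    (fun t ht => (hderiv2 t (interior_subset ht)).hasDerivWithinAt)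
    fun t ht => sub_nonneg.2 (ha t (interior_subset ht))

theorem le_secondDiff_of_le_fderiv2 {z k : E} {a : ℝ}
    (hf : ∀ t ∈ Set.Icc (-1 : ℝ) 1, ContDiffAt ℝ 2 f (z + t • k))
    (ha : ∀ t ∈ Set.Icc (-1 : ℝ) 1, a ≤ fderiv2 f (z + t • k) k k) : a ≤ secondDiff f z k := by
  have hconv := (convexOn_comp_add_smul_sub (convex_Icc _ _) hf ha).2 (x := -1) (y := 1)
    (by simp) (by simp) (by norm_num : (0 : ℝ) ≤ 1 / 2) (by norm_num : (0 : ℝ) ≤ 1 / 2)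
    (by norm_num)
  norm_num [← sub_eq_add_neg] at hconv
  unfold secondDiff
  linarith

theorem convexOn_of_fderiv2_nonneg (hs : Convex ℝ s) (hf : ∀ z ∈ s, ContDiffAt ℝ 2 f z)
    (h : ∀ z ∈ s, ∀ k, 0 ≤ fderiv2 f z k k) : ConvexOn ℝ s f := by
  refine ⟨hs, fun x hx y hy a b ha hb hab => ?_⟩
  have hmem : ∀ t ∈ Set.Icc (0 : ℝ) 1, x + t • (y - x) ∈ s := fun t ht =>
    hs.add_smul_sub_mem hx hy ht
  have hconv := (convexOn_comp_add_smul_sub (convex_Icc 0 1) (fun t ht => hf _ (hmem t ht))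
    fun t ht => h _ (hmem t ht) (y - x)).2 (x := 0) (y := 1) (by simp) (by simp) ha hb hab
  obtain rfl : a = 1 - b := by linarith
  rw [show (1 - b) • x + b • y = x + b • (y - x) by module]
  simpa using hconv

theorem add_fderiv_sub_le_of_convexOn {x y : E} (hconv : ConvexOn ℝ s f) (hx : x ∈ s) (hy : y ∈ s)
    (hf : DifferentiableAt ℝ f x) : f x + fderiv ℝ f x (y - x) ≤ f y := by
  have hline : (fun t : ℝ => x + t • (y - x)) = AffineMap.lineMap x y := by
    funext t; rw [AffineMap.lineMap_apply_module']; abel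
  have hderiv : HasDerivAt (f ∘ AffineMap.lineMap x y) (fderiv ℝ f x (y - x)) (0 : ℝ) := by
    rw [← hline]
    refine (hasDerivAt_comp_add_smul (by simpa using hf)).congr_deriv ?_
    rw [zero_smul, add_zero]
  have hslope := (hconv.comp_affineMap (AffineMap.lineMap x y)).le_slope_of_hasDerivAt
    (x := 0) (y := 1) (by simpa using hx) (by simpa using hy) one_pos hderiv
  simp only [slope_def_field, Function.comp_apply, AffineMap.lineMap_apply_one,
    AffineMap.lineMap_apply_zero, sub_zero, div_one] at hslope
  linarith

end SecondDifferences

section LeviMatrix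

theorem clm_sum_sum {κ : Type*} [Fintype κ] {E : Type*} [NormedAddCommGroup E] [NormedSpace ℝ E]
    (B : E →L[ℝ] E →L[ℝ] ℝ) (f g : κ → E) :
    B (∑ i, f i) (∑ j, g j) = ∑ i, ∑ j, B (f i) (g j) := by
  simp only [map_sum, _root_.sum_apply]
  exact Finset.sum_comm

variable {ι : Type*} [DecidableEq ι]

/-- The matrix of the Levi form of a real bilinear form `B` on `ℂⁿ`, the Hermitian form
`w ↦ (B w w + B (I w) (I w)) / 4`. For `B` the second derivative of `u` its `(i, j)` entry is
`∂_{ī} ∂_j u`, so this is the transpose of the complex Hessian. -/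
def leviMatrix : ((ι → ℂ) →L[ℝ] (ι → ℂ) →L[ℝ] ℝ) →ₗ[ℝ] Matrix ι ι ℂ where
  toFun B := of fun i j =>
    (((B (Pi.single j 1) (Pi.single i 1) + B (Pi.single j I) (Pi.single i I) : ℝ) : ℂ)
      + I * ((B (Pi.single j 1) (Pi.single i I) - B (Pi.single j I) (Pi.single i 1) : ℝ) : ℂ)) / 4
  map_add' B B' := by
    ext i j
    simp only [_root_.add_apply, of_apply, Matrix.add_apply]
    push_cast
    ring
  map_smul' r B := by
    ext i j
    simp only [_root_.smul_apply, of_apply, Matrix.smul_apply, smul_eq_mul, RingHom.id_apply,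
      real_smul]
    push_cast
    ring

theorem leviMatrix_apply (B : (ι → ℂ) →L[ℝ] (ι → ℂ) →L[ℝ] ℝ) (i j : ι) : leviMatrix B i j =
    (((B (Pi.single j 1) (Pi.single i 1) + B (Pi.single j I) (Pi.single i I) : ℝ) : ℂ) +
      I * ((B (Pi.single j 1) (Pi.single i I) - B (Pi.single j I) (Pi.single i 1) : ℝ) : ℂ)) / 4 :=
  rfl

theorem isHermitian_leviMatrix {B : (ι → ℂ) →L[ℝ] (ι → ℂ) →L[ℝ] ℝ} (hB : ∀ v w, B v w = B w v) :
    (leviMatrix B).IsHermitian := by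
  ext i j
  rw [conjTranspose_apply, leviMatrix_apply, leviMatrix_apply, hB (Pi.single i 1),
    hB (Pi.single i I), hB (Pi.single i 1), hB (Pi.single i I)]
  simp only [star_def, map_div₀, map_add, map_mul, conj_I, conj_ofReal, map_ofNat]
  push_cast
  ring

/-- The Levi matrix of `D ⊗ D`. For `D` the differential of a real function it is the matrix
`(∂_{ī} f ∂_j f)`. -/
def leviSq (D : (ι → ℂ) →L[ℝ] ℝ) : Matrix ι ι ℂ := leviMatrix (D.smulRight D)

variable [Fintype ι]

theorem eq_sum_re_smul_add_im_smul (w : ι → ℂ) :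
    w = ∑ j, ((w j).re • (Pi.single j 1 : ι → ℂ) + (w j).im • (Pi.single j I : ι → ℂ)) := by
  funext i
  simp [Finset.sum_apply, Pi.single_apply, Finset.sum_add_distrib]

theorem I_smul_eq_sum_re_smul_sub_im_smul (w : ι → ℂ) :
    I • w = ∑ j, ((w j).re • (Pi.single j I : ι → ℂ) - (w j).im • (Pi.single j 1 : ι → ℂ)) := by
  funext i
  refine Complex.ext ?_ ?_ <;> simp [Finset.sum_apply, Pi.single_apply]

theorem reDot_leviMatrix_mulVec (B : (ι → ℂ) →L[ℝ] (ι → ℂ) →L[ℝ] ℝ) (w : ι → ℂ) :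
    reDot w (leviMatrix B *ᵥ w) = (B w w + B (I • w) (I • w)) / 4 := by
  have hB := clm_sum_sum B
    (fun j => (w j).re • (Pi.single j 1 : ι → ℂ) + (w j).im • (Pi.single j I : ι → ℂ))
    (fun j => (w j).re • (Pi.single j 1 : ι → ℂ) + (w j).im • (Pi.single j I : ι → ℂ))
  have hBI := clm_sum_sum B
    (fun j => (w j).re • (Pi.single j I : ι → ℂ) - (w j).im • (Pi.single j 1 : ι → ℂ))
    (fun j => (w j).re • (Pi.single j I : ι → ℂ) - (w j).im • (Pi.single j 1 : ι → ℂ))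
  rw [← eq_sum_re_smul_add_im_smul] at hB
  rw [← I_smul_eq_sum_re_smul_sub_im_smul] at hBI
  rw [hB, hBI, ← Finset.sum_add_distrib, Finset.sum_div]
  simp only [reDot, dotProduct, mulVec, Finset.mul_sum, Complex.re_sum]
  rw [Finset.sum_comm]
  refine Finset.sum_congr rfl fun j _ => ?_
  rw [← Finset.sum_add_distrib, Finset.sum_div]
  refine Finset.sum_congr rfl fun i _ => ?_
  have h4 : (4 : ℂ) = ((4 : ℝ) : ℂ) := by norm_num
  simp only [leviMatrix_apply, map_add, map_sub, map_smul, _root_.add_apply, _root_.sub_apply,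
    _root_.smul_apply, h4]
  simp [Complex.div_ofReal_re, Complex.div_ofReal_im, -Complex.ofReal_ofNat]
  ring

theorem reDot_leviSq_mulVec (D : (ι → ℂ) →L[ℝ] ℝ) (w : ι → ℂ) :
    reDot w (leviSq D *ᵥ w) = (D w ^ 2 + D (I • w) ^ 2) / 4 := by
  rw [leviSq, reDot_leviMatrix_mulVec]
  simp only [ContinuousLinearMap.smulRight_apply, _root_.smul_apply, smul_eq_mul]
  ring

theorem posSemidef_leviSq (D : (ι → ℂ) →L[ℝ] ℝ) : (leviSq D).PosSemidef := by
  refine posSemidef_of_isHermitian_of_reDot_nonneg (isHermitian_leviMatrix fun v w => ?_)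
    fun w => ?_
  · simp only [ContinuousLinearMap.smulRight_apply, _root_.smul_apply, smul_eq_mul]
    ring
  · rw [reDot_leviSq_mulVec]
    positivity

theorem leviSq_ne_zero {D : (ι → ℂ) →L[ℝ] ℝ} {w : ι → ℂ} (hD : D w ≠ 0) : leviSq D ≠ 0 := by
  intro h
  have hform := reDot_leviSq_mulVec D w
  rw [h, zero_mulVec, reDot, dotProduct_zero, zero_re] at hform
  have := sq_pos_of_ne_zero hD
  have := sq_nonneg (D (I • w))
  linarith

theorem continuous_leviMatrix :
    Continuous (leviMatrix : ((ι → ℂ) →L[ℝ] (ι → ℂ) →L[ℝ] ℝ) → Matrix ι ι ℂ) :=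
  continuous_matrix fun i j => by
    simp only [leviMatrix_apply]
    fun_prop

theorem continuous_leviSq : Continuous (leviSq : ((ι → ℂ) →L[ℝ] ℝ) → Matrix ι ι ℂ) :=
  continuous_leviMatrix.comp
    ((ContinuousLinearMap.smulRightL ℝ (ι → ℂ) _).continuous.clm_apply continuous_id)

section

open scoped Matrix.Norms.L2Operator

variable {E : Type*} [NormedAddCommGroup E] [NormedSpace ℝ E]

theorem contDiffOn_matrix_inv {s : Set E} {M : E → Matrix ι ι ℂ} (hM : ContDiffOn ℝ 1 M s)
    (h : ∀ z ∈ s, IsUnit (M z)) : ContDiffOn ℝ 1 (fun z => (M z)⁻¹) s := by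
  simp only [nonsing_inv_eq_ringInverse]
  intro z hz
  obtain ⟨U, hU⟩ := h z hz
  have hinv : ContDiffAt ℝ 1 Ring.inverse (M z) := hU ▸ contDiffAt_ringInverse ℝ U
  exact hinv.comp_contDiffWithinAt z (hM z hz)

theorem reDot_mulVec_self_le (A : Matrix ι ι ℂ) (w : ι → ℂ) :
    reDot (A *ᵥ w) (A *ᵥ w) ≤ ‖A‖ ^ 2 * reDot w w := by
  have hnorm : ∀ v : ι → ℂ, reDot v v = ‖WithLp.toLp 2 v‖ ^ 2 := fun v => by
    rw [reDot_self, EuclideanSpace.norm_sq_eq]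
  rw [hnorm, hnorm, ← mul_pow]
  gcongr
  exact l2_opNorm_mulVec A (WithLp.toLp 2 w)

theorem exists_reDot_sub_mulVec_le {K : Set E} (hK : IsCompact K) (hKc : Convex ℝ K)
    {P : E → Matrix ι ι ℂ} (hP : ContDiffOn ℝ 1 P K) :
    ∃ L : ℝ, 0 ≤ L ∧ ∀ x ∈ K, ∀ y ∈ K, ∀ w,
      reDot ((P x - P y) *ᵥ w) ((P x - P y) *ᵥ w) ≤ L * ‖x - y‖ ^ 2 * reDot w w := by
  obtain ⟨L, hL⟩ := hP.exists_lipschitzOnWith one_ne_zero hKc hK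
  refine ⟨L ^ 2, by positivity, fun x hx y hy w => (reDot_mulVec_self_le _ w).trans ?_⟩
  have hlip := hL.dist_le_mul x hx y hy
  rw [dist_eq_norm, dist_eq_norm] at hlip
  rw [← mul_pow]
  have := reDot_self_nonneg w
  gcongr

end

end LeviMatrix

section Hessians

variable {n : ℕ} {u : (Fin n → ℂ) → ℝ} {z : Fin n → ℂ}

theorem transpose_hessA (hu : ContDiffAt ℝ 2 u z) : (hessA u z)ᵀ = leviMatrix (fderiv2 u z) := by
  ext j i
  have hwdzbar : wdzbar (cplx u) j =ᶠ[nhds z] fun y =>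
      (((fderiv ℝ u y (Pi.single j 1) : ℝ) : ℂ)
        + I * ((fderiv ℝ u y (Pi.single j I) : ℝ) : ℂ)) / 2 := by
    filter_upwards [eventually_differentiableAt hu] with y hy
    have hcplx : HasFDerivAt (cplx u) (Complex.ofRealCLM.comp (fderiv ℝ u y)) y :=
      Complex.ofRealCLM.hasFDerivAt.comp y hy.hasFDerivAt
    simp [wdzbar, hcplx.fderiv]
  have hfderiv : ∀ e : Fin n → ℂ, HasFDerivAt (fun y => ((fderiv ℝ u y e : ℝ) : ℂ))
      (Complex.ofRealCLM.comp ((ContinuousLinearMap.apply ℝ ℝ e).comp (fderiv2 u z))) z :=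
    fun e => Complex.ofRealCLM.hasFDerivAt.comp z
      ((ContinuousLinearMap.apply ℝ ℝ e).hasFDerivAt.comp z (hasFDerivAt_fderiv hu))
  have hsum := ((hfderiv (Pi.single j 1)).add ((hfderiv (Pi.single j I)).const_mul I)).mul_const
    (2⁻¹ : ℂ)
  have hwdz : fderiv ℝ (wdzbar (cplx u) j) z = _ :=
    hwdzbar.fderiv_eq.trans (by simpa [div_eq_mul_inv] using hsum.fderiv)
  simp only [transpose_apply, hessA, wdz, of_apply, hwdz, leviMatrix_apply]
  refine Complex.ext ?_ ?_ <;> simp <;> ring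

theorem realHess_apply (hu : ContDiffAt ℝ 2 u z) (a b : Fin n ⊕ Fin n) :
    realHess u z a b = fderiv2 u z (realDir a) (realDir b) := by
  have h : HasFDerivAt (fun w => fderiv ℝ u w (realDir b)) _ z :=
    (ContinuousLinearMap.apply ℝ ℝ (realDir b)).hasFDerivAt.comp z (hasFDerivAt_fderiv hu)
  rw [realHess, of_apply, h.fderiv]
  rfl

theorem sum_smul_realDir_ne_zero {x : Fin n ⊕ Fin n → ℝ} (hx : x ≠ 0) :
    ∑ a, x a • (realDir a : Fin n → ℂ) ≠ 0 := by
  intro h0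
  have hcoord : ∀ j, (⟨x (Sum.inl j), x (Sum.inr j)⟩ : ℂ) = 0 := fun j => by
    rw [← Pi.zero_apply (M := fun _ : Fin n => ℂ) j, ← h0]
    refine Complex.ext ?_ ?_ <;> simp [Finset.sum_apply, realDir, Pi.single_apply]
  refine hx (funext fun a => ?_)
  rcases a with j | j
  · exact congrArg Complex.re (hcoord j)
  · exact congrArg Complex.im (hcoord j)

theorem posDef_realHess (hu : ContDiffAt ℝ 2 u z) (h : ∀ k ≠ 0, 0 < fderiv2 u z k k) :
    (realHess u z).PosDef := by
  refine .of_dotProduct_mulVec_pos ?_ fun x hx => ?_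
  · ext a b
    rw [conjTranspose_apply, realHess_apply hu, realHess_apply hu, star_trivial]
    exact hu.isSymmSndFDerivAt (by simp) _ _
  · refine (h _ (sum_smul_realDir_ne_zero hx)).trans_eq ?_
    rw [clm_sum_sum]
    simp only [dotProduct, mulVec, Finset.mul_sum, realHess_apply hu]
    refine Finset.sum_congr rfl fun a _ => Finset.sum_congr rfl fun b _ => ?_
    simp only [map_smul, _root_.smul_apply, smul_eq_mul, star_trivial]
    ring

end Hessians

section PointPairs

variable {E : Type*} [NormedAddCommGroup E] {Ω K : Set E}

/-- The pairs `(z, k)` of a midpoint and a displacement for which the endpoints `z + k` and `z - k`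
lie in `Ω`: the domain of two-point functions such as the second difference. -/
def pointPairs (Ω : Set E) : Set (E × E) := {q | q.1 + q.2 ∈ Ω ∧ q.1 - q.2 ∈ Ω}

theorem pointPairs_mono (h : K ⊆ Ω) : pointPairs K ⊆ pointPairs Ω :=
  fun _ hq => hq.imp (@h _) (@h _)

theorem isOpen_pointPairs (hΩ : IsOpen Ω) : IsOpen (pointPairs Ω) :=
  (hΩ.preimage (continuous_fst.add continuous_snd)).inter
    (hΩ.preimage (continuous_fst.sub continuous_snd))

variable [NormedSpace ℝ E]

theorem fst_mem_of_mem_pointPairs {q : E × E} (hΩ : Convex ℝ Ω) (hq : q ∈ pointPairs Ω) :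
    q.1 ∈ Ω := by
  have hmid := hΩ hq.1 hq.2 (by norm_num : (0 : ℝ) ≤ 1 / 2) (by norm_num : (0 : ℝ) ≤ 1 / 2)
    (by norm_num)
  rwa [show (1 / 2 : ℝ) • (q.1 + q.2) + (1 / 2 : ℝ) • (q.1 - q.2) = q.1 by module] at hmid

theorem isCompact_pointPairs (hK : IsCompact K) : IsCompact (pointPairs K) := by
  convert (hK.prod hK).image (f := fun p : E × E =>
    ((2⁻¹ : ℝ) • (p.1 + p.2), (2⁻¹ : ℝ) • (p.1 - p.2))) (by fun_prop)
  ext ⟨z, k⟩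
  constructor
  · rintro ⟨hadd, hsub⟩
    exact ⟨(z + k, z - k), ⟨hadd, hsub⟩, Prod.ext (by dsimp only; module) (by dsimp only; module)⟩
  · rintro ⟨⟨x, y⟩, ⟨hx, hy⟩, hxy⟩
    obtain ⟨rfl, rfl⟩ := Prod.ext_iff.1 hxy
    constructor
    · convert hx using 1; dsimp only; module
    · convert hy using 1; dsimp only; module

theorem isLocalMax_comp_add_smul {F : E × E → ℝ} {z k : E} (hF : IsLocalMax F (z, k)) (s d : E) :
    IsLocalMax (fun t : ℝ => F (z + t • s, k + t • d)) 0 :=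
  IsLocalMax.comp_continuous (f := F) (g := fun t : ℝ => (z + t • s, k + t • d)) (b := 0)
    (by simpa using hF) (by fun_prop)

theorem exists_isLocalMax_of_pos {X : Type*} [TopologicalSpace X] {F : X → ℝ} {K U : Set X} {q₀ : X}
    (hK : IsCompact K) (hU : IsOpen U) (hKU : K ⊆ U) (hF : ContinuousOn F U)
    (hpos : ∀ q ∈ U, 0 < F q → q ∈ K) (hq₀ : q₀ ∈ U) (hFq₀ : 0 < F q₀) :
    ∃ q ∈ K, 0 < F q ∧ IsLocalMax F q := by
  have hq₀K := hpos q₀ hq₀ hFq₀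
  obtain ⟨q, hq, hmax⟩ := hK.exists_isMaxOn ⟨q₀, hq₀K⟩ (hF.mono hKU)
  have hFq : 0 < F q := hFq₀.trans_le (hmax hq₀K)
  refine ⟨q, hq, hFq, ?_⟩
  filter_upwards [hU.mem_nhds (hKU hq)] with p hp
  by_contra! hlt
  exact hlt.not_ge (hmax (hpos p hp (hFq.trans hlt)))

end PointPairs

section KEPotential

variable {ι : Type*} [Fintype ι] [DecidableEq ι] {c : ℝ} {Ω : Set (ι → ℂ)} {u : (ι → ℂ) → ℝ}

/-- The complex Hessian of `u` at `z` in the convention `(i, j) ↦ ∂_{ī} ∂_j u`, the one for which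
`star w ⬝ᵥ complexHessian u z *ᵥ w` is the Levi form; it is the transpose of `hessA u z`. -/
def complexHessian (u : (ι → ℂ) → ℝ) (z : ι → ℂ) : Matrix ι ι ℂ := leviMatrix (fderiv2 u z)

/-- A strictly plurisubharmonic solution of `det (u_{ij̄}) = exp (c u)`, with `c > 0`, on a bounded
convex domain, tending to infinity at the boundary. -/
structure IsKEPotential (c : ℝ) (Ω : Set (ι → ℂ)) (u : (ι → ℂ) → ℝ) : Prop where
  pos : 0 < c
  isOpen : IsOpen Ω
  isBounded : Bornology.IsBounded Ω
  convex : Convex ℝ Ω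
  contDiffOn : ContDiffOn ℝ 3 u Ω
  posDef : ∀ z ∈ Ω, (complexHessian u z).PosDef
  det_eq : ∀ z ∈ Ω, (complexHessian u z).det = (Real.exp (c * u z) : ℂ)
  tendsto : ∀ p ∈ frontier Ω, Filter.Tendsto u (nhdsWithin p Ω) Filter.atTop

namespace IsKEPotential

variable {z k : ι → ℂ}

theorem contDiffAt (h : IsKEPotential c Ω u) (hz : z ∈ Ω) : ContDiffAt ℝ 2 u z :=
  (h.contDiffOn.contDiffAt (h.isOpen.mem_nhds hz)).of_le (by norm_num)

theorem contDiffOn_fderiv2 (h : IsKEPotential c Ω u) : ContDiffOn ℝ 1 (fderiv2 u) Ω :=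
  (h.contDiffOn.fderiv_of_isOpen (m := 2) h.isOpen (by norm_num)).fderiv_of_isOpen h.isOpen
    (by norm_num)

theorem isCompact_sublevel (h : IsKEPotential c Ω u) (M : ℝ) : IsCompact {z ∈ Ω | u z ≤ M} := by
  refine Metric.isCompact_of_isClosed_isBounded ?_ (h.isBounded.subset fun z hz => hz.1)
  refine isClosed_of_closure_subset fun p hp => ?_
  have : (nhdsWithin p {z ∈ Ω | u z ≤ M}).NeBot := mem_closure_iff_nhdsWithin_neBot.1 hp
  have hle : nhdsWithin p {z ∈ Ω | u z ≤ M} ≤ nhdsWithin p Ω :=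
    nhdsWithin_mono _ fun z hz => hz.1
  have hev : ∀ᶠ z in nhdsWithin p {z ∈ Ω | u z ≤ M}, u z ≤ M := by
    filter_upwards [self_mem_nhdsWithin] with z hz using hz.2
  by_cases hpΩ : p ∈ Ω
  · exact ⟨hpΩ, le_of_tendsto ((h.contDiffOn.continuousOn p hpΩ).mono_left hle) hev⟩
  · have hpf : p ∈ frontier Ω := by
      rw [h.isOpen.frontier_eq]
      exact ⟨closure_mono (fun z hz => hz.1) hp, hpΩ⟩
    obtain ⟨z, hgt, hz⟩ :=
      ((((h.tendsto p hpf).mono_left hle).eventually_gt_atTop M).and hev).exists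
    exact absurd hz hgt.not_ge

theorem exists_le (h : IsKEPotential c Ω u) : ∃ m, ∀ z ∈ Ω, m ≤ u z := by
  obtain ⟨m, hm⟩ := (h.isCompact_sublevel 0).bddBelow_image
    (h.contDiffOn.continuousOn.mono fun z hz => hz.1)
  refine ⟨min m 0, fun z hz => ?_⟩
  rcases le_total (u z) 0 with h0 | h0
  · exact min_le_of_left_le (hm ⟨z, ⟨hz, h0⟩, rfl⟩)
  · exact min_le_of_right_le h0

theorem add_re_trace_le (h : IsKEPotential c Ω u) (hadd : z + k ∈ Ω) (hsub : z - k ∈ Ω)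
    {B : (ι → ℂ) →L[ℝ] (ι → ℂ) →L[ℝ] ℝ} {Y : Matrix ι ι ℂ} {g : ℝ} (hB : (leviMatrix B).PosDef)
    (hY : Y.IsHermitian) (hg : (leviMatrix B).det = (Real.exp g : ℂ))
    (hvar : ∀ w s d : ι → ℂ, s + d = (complexHessian u (z + k))⁻¹ *ᵥ w →
      s - d = (complexHessian u (z - k))⁻¹ *ᵥ w →
      2 * (B s s + B (I • s) (I • s)) + 8 * reDot w (Y *ᵥ w) ≤
        fderiv2 u (z + k) (s + d) (s + d) + fderiv2 u (z - k) (s - d) (s - d) +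
          (fderiv2 u (z + k) (I • s + I • d) (I • s + I • d) +
            fderiv2 u (z - k) (I • s - I • d) (I • s - I • d))) :
    g + ((meanInv (complexHessian u (z + k)) (complexHessian u (z - k)))⁻¹ * Y).trace.re ≤
      (c * u (z + k) + c * u (z - k)) / 2 := by
  refine add_re_trace_meanInv_inv_mul_le (h.posDef _ hadd) (h.posDef _ hsub) hB hY
    (h.det_eq _ hadd) (h.det_eq _ hsub) hg fun w => ?_
  set a := (complexHessian u (z + k))⁻¹ *ᵥ w with ha
  set b := (complexHessian u (z - k))⁻¹ *ᵥ w with hb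
  have hmean : meanInv (complexHessian u (z + k)) (complexHessian u (z - k)) *ᵥ w =
      (2⁻¹ : ℝ) • (a + b) := by
    rw [meanInv, smul_mulVec, add_mulVec, ha, hb]
  have hsd := hvar w ((2⁻¹ : ℝ) • (a + b)) ((2⁻¹ : ℝ) • (a - b)) (by module) (by module)
  rw [← smul_add I, ← smul_sub I, show (2⁻¹ : ℝ) • (a + b) + (2⁻¹ : ℝ) • (a - b) = a by module,
    show (2⁻¹ : ℝ) • (a + b) - (2⁻¹ : ℝ) • (a - b) = b by module] at hsd
  rw [hmean]
  simp only [complexHessian, reDot_leviMatrix_mulVec]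
  linarith

end IsKEPotential
end KEPotential

section WeakConvexity

variable {ι : Type*} [Fintype ι] [DecidableEq ι] {c : ℝ} {Ω : Set (ι → ℂ)} {u : (ι → ℂ) → ℝ}

namespace IsKEPotential

variable {p z k : ι → ℂ} {t : ℝ}

theorem exists_forall_dilation_le (h : IsKEPotential c Ω u) (hp : p ∈ Ω) (ht0 : 0 < t)
    (ht1 : t < 1) : ∃ M, ∀ z ∈ Ω, p + t • (z - p) ∈ Ω ∧ u (p + t • (z - p)) ≤ M := by
  have hmaps : Set.MapsTo (fun z => p + t • (z - p)) (closure Ω) Ω := fun z hz => by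
    have hmem := h.convex.add_smul_sub_mem_interior' (t := 1 - t) hz
      (h.isOpen.interior_eq.symm ▸ hp) ⟨by linarith, by linarith⟩
    rw [h.isOpen.interior_eq, show z + (1 - t) • (p - z) = p + t • (z - p) by module] at hmem
    exact hmem
  obtain ⟨M, hM⟩ := h.isBounded.isCompact_closure.bddAbove_image
    (f := fun z => u (p + t • (z - p)))
    (h.contDiffOn.continuousOn.comp (by fun_prop) hmaps)
  exact ⟨M, fun z hz => ⟨hmaps (subset_closure hz), hM ⟨z, subset_closure hz, rfl⟩⟩⟩

theorem det_sq_smul (h : IsKEPotential c Ω u) (ht0 : 0 < t) (hz : z ∈ Ω) :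
    (leviMatrix (t ^ 2 • fderiv2 u z)).det =
      (Real.exp (c * u z + 2 * Fintype.card ι * Real.log t) : ℂ) := by
  have hexp : Real.exp (2 * Fintype.card ι * Real.log t) = (t ^ 2) ^ Fintype.card ι := by
    rw [← pow_mul, ← Real.exp_log ht0, ← Real.exp_nat_mul, Real.log_exp]
    push_cast
    rfl
  rw [map_smul, det_smul_of_tower, ← complexHessian, h.det_eq z hz, Real.exp_add, hexp, real_smul,
    ← ofReal_mul, mul_comm]

/-- The dilate of a solution about `p` solves the equation up to the constant `2 n log t`. -/
theorem dilation_le_of_isLocalMax (h : IsKEPotential c Ω u) (ht0 : 0 < t)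
    (hadd : z + k ∈ Ω) (hsub : z - k ∈ Ω) (hdil : p + t • (z - p) ∈ Ω) {N : ℝ}
    (hmax : IsLocalMax (fun q : (ι → ℂ) × (ι → ℂ) =>
      2 * u (p + t • (q.1 - p)) - u (q.1 + q.2) - u (q.1 - q.2) - N) (z, k)) :
    c * u (p + t • (z - p)) + 2 * Fintype.card ι * Real.log t ≤
      (c * u (z + k) + c * u (z - k)) / 2 := by
  set y := p + t • (z - p) with hy
  have hvar : ∀ s d : ι → ℂ, 2 * (t ^ 2 * fderiv2 u y s s) ≤
      fderiv2 u (z + k) (s + d) (s + d) + fderiv2 u (z - k) (s - d) (s - d) := fun s d => by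
    have hjet := ((((hasJet2_comp_add_smul (h.contDiffAt hdil) (t • s)).const_mul 2).add
      ((hasJet2_comp_add_smul (h.contDiffAt hadd) (s + d)).const_mul (-1))).add
      ((hasJet2_comp_add_smul (h.contDiffAt hsub) (s - d)).const_mul (-1))).add (.const (-N))
    have hle := hjet.nonpos_of_isLocalMax ((isLocalMax_comp_add_smul hmax s d).congr
      (.of_forall fun τ => by
        dsimp only
        rw [show p + t • (z + τ • s - p) = y + τ • t • s by rw [hy]; module,
          show z + τ • s + (k + τ • d) = z + k + τ • (s + d) by module,
          show z + τ • s - (k + τ • d) = z - k + τ • (s - d) by module]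
        ring))
    simp only [map_smul, _root_.smul_apply, smul_eq_mul] at hle
    linarith
  have hle := h.add_re_trace_le hadd hsub (Y := 0) (map_smul leviMatrix (t ^ 2) (fderiv2 u y) ▸
    (h.posDef y hdil).smul (sq_pos_of_pos ht0)) isHermitian_zero (h.det_sq_smul ht0 hdil)
    fun w s d _ _ => by
      have h1 := hvar s d
      have hI := hvar (I • s) (I • d)
      simp only [_root_.smul_apply, smul_eq_mul, zero_mulVec, reDot, dotProduct_zero, zero_re]
      linarith
  simpa using hle

theorem two_mul_dilation_le (h : IsKEPotential c Ω u) (hp : p ∈ Ω) (ht0 : 0 < t) (ht1 : t < 1)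
    (hadd : z + k ∈ Ω) (hsub : z - k ∈ Ω) :
    2 * u (p + t • (z - p)) - u (z + k) - u (z - k) ≤ -(4 * Fintype.card ι * Real.log t) / c := by
  set N := -(4 * Fintype.card ι * Real.log t) / c
  have hcN : c * N = -(4 * Fintype.card ι * Real.log t) := mul_div_cancel₀ _ h.pos.ne'
  have hN : 0 ≤ N := div_nonneg
    (neg_nonneg.2 (mul_nonpos_of_nonneg_of_nonpos (by positivity) (Real.log_nonpos ht0.le ht1.le)))
    h.pos.le
  obtain ⟨M, hM⟩ := h.exists_forall_dilation_le hp ht0 ht1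
  obtain ⟨m, hm⟩ := h.exists_le
  have hmid : ∀ q ∈ pointPairs Ω, q.1 ∈ Ω := fun q => fst_mem_of_mem_pointPairs h.convex
  have hcont : ContinuousOn (fun q : (ι → ℂ) × (ι → ℂ) =>
      2 * u (p + t • (q.1 - p)) - u (q.1 + q.2) - u (q.1 - q.2) - N) (pointPairs Ω) :=
    (((continuousOn_const.mul (h.contDiffOn.continuousOn.comp (by fun_prop)
      fun q hq => (hM _ (hmid q hq)).1)).sub
      (h.contDiffOn.continuousOn.comp (by fun_prop) fun q hq => hq.1)).sub
      (h.contDiffOn.continuousOn.comp (by fun_prop) fun q hq => hq.2)).sub continuousOn_const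
  by_contra! hlt
  obtain ⟨⟨y, l⟩, hq, hpos, hmax⟩ := exists_isLocalMax_of_pos (q₀ := (z, k))
    (isCompact_pointPairs (h.isCompact_sublevel (2 * M - m))) (isOpen_pointPairs h.isOpen)
    (pointPairs_mono fun z hz => hz.1) hcont (fun q hq hpos => by
      have := (hM _ (hmid q hq)).2
      have := hm _ hq.1
      have := hm _ hq.2
      exact ⟨⟨hq.1, by linarith⟩, ⟨hq.2, by linarith⟩⟩) ⟨hadd, hsub⟩ (sub_pos.2 hlt)
  have hle := h.dilation_le_of_isLocalMax ht0 hq.1.1 hq.2.1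
    (hM y (hmid _ (pointPairs_mono (fun z hz => hz.1) hq))).1 hmax
  have := mul_pos h.pos hpos
  dsimp only at this
  linarith

theorem secondDiff_nonneg (h : IsKEPotential c Ω u) (hadd : z + k ∈ Ω) (hsub : z - k ∈ Ω) :
    0 ≤ secondDiff u z k := by
  have hz : z ∈ Ω := fst_mem_of_mem_pointPairs (q := (z, k)) h.convex ⟨hadd, hsub⟩
  have hlim : Filter.Tendsto (fun t => -(4 * Fintype.card ι * Real.log t) / c)
      (nhdsWithin 1 (Set.Iio 1)) (nhds 0) := by
    have hcont : ContinuousAt (fun t => -(4 * Fintype.card ι * Real.log t) / c) 1 := by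
      fun_prop (disch := norm_num)
    simpa using hcont.tendsto.mono_left nhdsWithin_le_nhds
  have hle : 2 * u z - u (z + k) - u (z - k) ≤ 0 := ge_of_tendsto hlim (by
    filter_upwards [Ioo_mem_nhdsLT one_pos] with t ht
    simpa using h.two_mul_dilation_le hz ht.1 ht.2 hadd hsub)
  unfold secondDiff
  linarith

theorem eventually_add_smul_mem (h : IsKEPotential c Ω u) (hz : z ∈ Ω) (k : ι → ℂ) :
    ∀ᶠ t : ℝ in nhds 0, z + t • k ∈ Ω ∧ z - t • k ∈ Ω := by
  have hcont : Continuous fun t : ℝ => (z, t • k) := by fun_prop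
  exact hcont.continuousAt.eventually ((isOpen_pointPairs h.isOpen).mem_nhds
    (by simpa [pointPairs] using hz))

theorem fderiv2_nonneg (h : IsKEPotential c Ω u) (hz : z ∈ Ω) (k : ι → ℂ) :
    0 ≤ fderiv2 u z k k :=
  le_fderiv2_of_mul_sq_le_secondDiff (h.contDiffAt hz) (by
    filter_upwards [h.eventually_add_smul_mem hz k] with t ht
    simpa using h.secondDiff_nonneg ht.1 ht.2)

theorem convexOn (h : IsKEPotential c Ω u) : ConvexOn ℝ Ω u :=
  convexOn_of_fderiv2_nonneg h.convex (fun _ => h.contDiffAt) fun _ hz => h.fderiv2_nonneg hz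

theorem convex_sublevel (h : IsKEPotential c Ω u) (M : ℝ) : Convex ℝ {z ∈ Ω | u z ≤ M} :=
  h.convexOn.convex_le M

end IsKEPotential
end WeakConvexity

section Bregman

variable {E : Type*} [NormedAddCommGroup E] [NormedSpace ℝ E] {f : E → ℝ} {s : Set E} {z₁ z : E}

/-- The Bregman distance of a function `f` from `z₁` to `z`: the height of the graph of `f` over
its tangent plane at `z₁`. -/
def bregman (f : E → ℝ) (z₁ z : E) : ℝ := f z - f z₁ - fderiv ℝ f z₁ (z - z₁)

theorem hasJet2_bregman (hf : ContDiffAt ℝ 2 f z) (w : E) :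
    HasJet2 (fun t => bregman f z₁ (z + t • w)) (bregman f z₁ z)
      ((fderiv ℝ f z - fderiv ℝ f z₁) w) (fderiv2 f z w w) := by
  refine ((hasJet2_comp_add_smul hf w).add ((HasJet2.const (-f z₁ - fderiv ℝ f z₁ (z - z₁))).add
    (HasJet2.id.const_mul (-fderiv ℝ f z₁ w)))).congr (fun t => ?_) ?_ ?_ ?_
  · rw [bregman, show z + t • w - z₁ = z - z₁ + t • w by module, map_add, map_smul, smul_eq_mul]
    ring
  · unfold bregman; ring
  · rw [_root_.sub_apply]; ring
  · ring

theorem bregman_le_fderiv_sub_of_convexOn (hconv : ConvexOn ℝ s f) (hz₁ : z₁ ∈ s) (hz : z ∈ s)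
    (hf : DifferentiableAt ℝ f z) : bregman f z₁ z ≤ (fderiv ℝ f z - fderiv ℝ f z₁) (z - z₁) := by
  have htangent := add_fderiv_sub_le_of_convexOn hconv hz hz₁ hf
  rw [← neg_sub z z₁, map_neg] at htangent
  rw [bregman, _root_.sub_apply]
  linarith

end Bregman

section Center

theorem eventually_abs_sub_le_of_continuousAt {X E : Type*} [TopologicalSpace X]
    [NormedAddCommGroup E] [NormedSpace ℝ E] {B : X → E →L[ℝ] E →L[ℝ] ℝ} {x : X}
    (hB : ContinuousAt B x) {ε : ℝ} (hε : 0 < ε) :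
    ∀ᶠ y in nhds x, ∀ k, |B y k k - B x k k| ≤ ε * ‖k‖ ^ 2 := by
  filter_upwards [(Metric.tendsto_nhds (f := nhds x) (u := B) (a := B x)).1 hB.tendsto ε hε]
    with y hy k
  have hnorm : ‖B y - B x‖ < ε := (dist_eq_norm (B y) (B x)).symm.trans_lt hy
  calc |B y k k - B x k k| ≤ ‖B y - B x‖ * ‖k‖ * ‖k‖ := (B y - B x).le_opNorm₂ k k
    _ ≤ ε * ‖k‖ ^ 2 := by rw [mul_assoc, ← sq]; gcongr

variable {ι : Type*} [Fintype ι] [DecidableEq ι] {c : ℝ} {Ω : Set (ι → ℂ)} {u : (ι → ℂ) → ℝ}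

namespace IsKEPotential

variable {z₁ : ι → ℂ}

theorem exists_isMinOn_sub_reDot_self (h : IsKEPotential c Ω u) (hne : Ω.Nonempty) :
    ∃ z₁ ∈ Ω, IsMinOn (fun z => u z - reDot z z) Ω z₁ := by
  obtain ⟨Q, hQ⟩ := h.isBounded.isCompact_closure.bddAbove_image
    (continuous_reDot_self (ι := ι)).continuousOn
  have hQ : ∀ z ∈ Ω, reDot z z ≤ Q := fun z hz => hQ ⟨z, subset_closure hz, rfl⟩
  obtain ⟨z₀, hz₀⟩ := hne
  have hz₀K : z₀ ∈ {z ∈ Ω | u z ≤ u z₀ + Q} :=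
    ⟨hz₀, le_add_of_nonneg_right ((reDot_self_nonneg z₀).trans (hQ z₀ hz₀))⟩
  obtain ⟨z₁, hz₁, hmin⟩ := (h.isCompact_sublevel (u z₀ + Q)).exists_isMinOn ⟨z₀, hz₀K⟩
    ((h.contDiffOn.continuousOn.mono fun z hz => hz.1).sub continuous_reDot_self.continuousOn)
  refine ⟨z₁, hz₁.1, fun z hz => ?_⟩
  rcases le_or_gt (u z) (u z₀ + Q) with hle | hgt
  · exact hmin ⟨hz, hle⟩
  · have hz₁₀ : u z₁ - reDot z₁ z₁ ≤ u z₀ - reDot z₀ z₀ := hmin hz₀K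
    have := hQ z hz
    have := reDot_self_nonneg z₀
    change u z₁ - reDot z₁ z₁ ≤ u z - reDot z z
    linarith

theorem exists_center (h : IsKEPotential c Ω u) (hne : Ω.Nonempty) :
    ∃ z₁ ∈ Ω, (∀ z ∈ Ω, reDot (z - z₁) (z - z₁) ≤ bregman u z₁ z) ∧
      ∀ k, 2 * reDot k k ≤ fderiv2 u z₁ k k := by
  obtain ⟨z₁, hz₁, hmin⟩ := h.exists_isMinOn_sub_reDot_self hne
  have hjet := fun k => (hasJet2_reDot_self z₁ k).add
    ((hasJet2_comp_add_smul (h.contDiffAt hz₁) k).const_mul (-1))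
  have hmax : ∀ k : ι → ℂ, IsLocalMax (fun t : ℝ =>
      reDot (z₁ + t • k) (z₁ + t • k) + -1 * u (z₁ + t • k)) 0 := fun k => by
    filter_upwards [h.eventually_add_smul_mem hz₁ k] with t ht
    have hle : u z₁ - reDot z₁ z₁ ≤ _ := hmin ht.1
    simp only [zero_smul, add_zero]
    linarith
  refine ⟨z₁, hz₁, fun z hz => ?_, fun k => ?_⟩
  · have hcrit := (hjet (z - z₁)).eq_zero_of_isLocalMax (hmax _)
    have hle : u z₁ - reDot z₁ z₁ ≤ u z - reDot z z := hmin hz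
    have hz₁z : reDot (z - z₁) (z - z₁) =
        reDot z z - reDot z₁ z₁ - 2 * reDot z₁ (z - z₁) := by
      simp only [reDot_sub_right, reDot_comm (z - z₁)]
      rw [reDot_comm z₁ z]
      ring
    rw [bregman]
    linarith
  · linarith [(hjet k).nonpos_of_isLocalMax (hmax k)]

theorem exists_ball_reDot_self_le_fderiv2 (h : IsKEPotential c Ω u) (hz₁ : z₁ ∈ Ω)
    (hpos : ∀ k, 2 * reDot k k ≤ fderiv2 u z₁ k k) :
    ∃ r > 0, ∀ z, ‖z - z₁‖ ≤ r → z ∈ Ω ∧ ∀ k, reDot k k ≤ fderiv2 u z k k := by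
  have hcont : ContinuousAt (fderiv2 u) z₁ :=
    h.contDiffOn_fderiv2.continuousOn.continuousAt (h.isOpen.mem_nhds hz₁)
  obtain ⟨r, hr, hball⟩ := Metric.nhds_basis_closedBall.eventually_iff.1
    ((h.isOpen.eventually_mem hz₁).and (eventually_abs_sub_le_of_continuousAt hcont one_pos))
  refine ⟨r, hr, fun z hz => ?_⟩
  obtain ⟨hzΩ, hclose⟩ := hball (mem_closedBall_iff_norm.2 hz)
  refine ⟨hzΩ, fun k => ?_⟩
  linarith [hpos k, (abs_le.1 (hclose k)).1, norm_sq_le_reDot_self k]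

theorem exists_mul_reDot_self_le_secondDiff (h : IsKEPotential c Ω u) {r : ℝ} (hr : 0 < r)
    (hball : ∀ z, ‖z - z₁‖ ≤ r → z ∈ Ω ∧ ∀ k, reDot k k ≤ fderiv2 u z k k) :
    ∃ a > 0, ∀ z k, ‖z - z₁‖ ≤ r / 2 → z + k ∈ Ω → z - k ∈ Ω →
      a * reDot k k ≤ secondDiff u z k := by
  obtain ⟨R, hR, hΩR⟩ := h.isBounded.exists_pos_norm_le
  have ht1 : r / (2 * R + r) ≤ 1 := (div_le_one (by positivity)).2 (by linarith)
  have htR : r / (2 * R + r) * R ≤ r / 2 := by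
    rw [div_mul_eq_mul_div, div_le_div_iff₀ (by positivity) two_pos]
    nlinarith
  have ht : 0 < r / (2 * R + r) := by positivity
  generalize r / (2 * R + r) = t at ht ht1 htR
  refine ⟨t, ht, fun z k hz hadd hsub => ?_⟩
  have hk : ‖k‖ ≤ R := by
    rw [show k = (1 / 2 : ℝ) • (z + k) - (1 / 2 : ℝ) • (z - k) by module]
    refine (norm_sub_le _ _).trans ?_
    rw [norm_smul, norm_smul, Real.norm_of_nonneg one_half_pos.le]
    linarith [hΩR _ hadd, hΩR _ hsub]
  have hseg : ∀ τ ∈ Set.Icc (-1 : ℝ) 1, ‖z + τ • t • k - z₁‖ ≤ r := fun τ hτ => calc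
    _ = ‖(z - z₁) + τ • t • k‖ := by rw [add_sub_right_comm]
    _ ≤ ‖z - z₁‖ + |τ| * (t * ‖k‖) := by
        refine (norm_add_le _ _).trans_eq ?_
        rw [norm_smul, norm_smul, Real.norm_eq_abs, Real.norm_of_nonneg ht.le]
    _ ≤ r / 2 + 1 * (t * R) := by gcongr; exact abs_le.2 hτ
    _ ≤ r := by linarith
  have hlower : reDot (t • k) (t • k) ≤ secondDiff u z (t • k) :=
    le_secondDiff_of_le_fderiv2 (fun τ hτ => h.contDiffAt (hball _ (hseg τ hτ)).1)
      fun τ hτ => (hball _ (hseg τ hτ)).2 _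
  have hzΩ : z ∈ Ω := (hball z (by linarith)).1
  refine le_of_mul_le_mul_left ?_ ht
  calc t * (t * reDot k k) = reDot (t • k) (t • k) := by rw [reDot_smul_left, reDot_smul_right]
    _ ≤ t * secondDiff u z k :=
        hlower.trans (secondDiff_smul_le h.convexOn hzΩ hadd hsub ht.le ht1)

end IsKEPotential
end Center

section Barrier

theorem exists_le_sq_sub_mul_sub_mul {X : Type*} [TopologicalSpace X] {K : Set X} {f g : X → ℝ}
    (hK : IsCompact K) (hf : ContinuousOn f K) (hg : ContinuousOn g K) (hpos : ∀ q ∈ K, 0 < f q)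
    {N : ℝ} (hN : 0 ≤ N) : ∃ α > 0, ∀ q ∈ K, N ≤ (α ^ 2 - 2 * α) * f q - α * g q := by
  obtain ⟨f₀, hf₀, hle⟩ := hK.exists_forall_le' hf hpos
  obtain ⟨C, hC⟩ := hK.exists_bound_of_continuousOn hg
  have hquot : 0 ≤ (|C| + N) / f₀ := by positivity
  refine ⟨2 + (|C| + N) / f₀, by linarith, fun q hq => ?_⟩
  have hfq : |C| + N ≤ (|C| + N) / f₀ * f q := by
    rw [div_mul_eq_mul_div, le_div_iff₀ hf₀]
    gcongr
    exact hle q hq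
  have hgq : g q ≤ |C| := (le_abs_self _).trans ((hC q hq).trans (le_abs_self C))
  generalize (|C| + N) / f₀ = β at hquot hfq
  calc N ≤ (2 + β) * N := le_mul_of_one_le_left hN (by linarith)
    _ ≤ (2 + β) * (β * f q - g q) := by gcongr; linarith
    _ = _ := by ring

variable {ι : Type*} [Fintype ι] {f : (ι → ℂ) → ℝ} {z₁ z k : ι → ℂ} {α δ T : ℝ}

/-- The two-point function of the maximum principle for strict convexity. The weight
`exp (-α ψ) - exp (-α T)`, with `ψ` the Bregman distance from `z₁`, is positive exactly where
`ψ < T`, and `barrier ≤ 0` on all pairs is a quantitative strict convexity of `f` there. -/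
def barrier (f : (ι → ℂ) → ℝ) (z₁ : ι → ℂ) (α δ T : ℝ) (q : (ι → ℂ) × (ι → ℂ)) : ℝ :=
  δ * ((Real.exp (-α * bregman f z₁ q.1) - Real.exp (-α * T)) * reDot q.2 q.2) -
    secondDiff f q.1 q.2

theorem barrier_le {q : (ι → ℂ) × (ι → ℂ)} (hα : 0 ≤ α) (hδ : 0 ≤ δ)
    (hψ : 0 ≤ bregman f z₁ q.1) :
    barrier f z₁ α δ T q ≤ δ * reDot q.2 q.2 - secondDiff f q.1 q.2 := by
  have hexp : Real.exp (-α * bregman f z₁ q.1) ≤ 1 :=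
    Real.exp_le_one_iff.2 (mul_nonpos_of_nonpos_of_nonneg (by linarith) hψ)
  have hle := mul_le_mul_of_nonneg_left (mul_le_mul_of_nonneg_right
    (show Real.exp (-α * bregman f z₁ q.1) - Real.exp (-α * T) ≤ 1 by
      linarith [Real.exp_pos (-α * T)]) (reDot_self_nonneg q.2)) hδ
  rw [barrier]
  linarith

theorem bregman_lt_of_barrier_pos (hα : 0 < α) (hδ : 0 ≤ δ) (hsd : 0 ≤ secondDiff f z k)
    (hpos : 0 < barrier f z₁ α δ T (z, k)) : bregman f z₁ z < T := by
  by_contra! hle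
  have hexp : Real.exp (-α * bregman f z₁ z) ≤ Real.exp (-α * T) :=
    Real.exp_le_exp.2 (mul_le_mul_of_nonpos_left hle (by linarith))
  have := mul_nonpos_of_nonneg_of_nonpos hδ
    (mul_nonpos_of_nonpos_of_nonneg (sub_nonpos.2 hexp) (reDot_self_nonneg k))
  rw [barrier] at hpos
  linarith

theorem le_fderiv2_of_isLocalMax_barrier (hz : ContDiffAt ℝ 2 f z)
    (hadd : ContDiffAt ℝ 2 f (z + k)) (hsub : ContDiffAt ℝ 2 f (z - k))
    (hmax : IsLocalMax (barrier f z₁ α δ T) (z, k)) (s d : ι → ℂ) :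
    2 * fderiv2 f z s s + δ * (Real.exp (-α * bregman f z₁ z) *
        ((α ^ 2 * (fderiv ℝ f z - fderiv ℝ f z₁) s ^ 2 - α * fderiv2 f z s s) * reDot k k -
          4 * α * ((fderiv ℝ f z - fderiv ℝ f z₁) s * reDot k d)) +
        2 * ((Real.exp (-α * bregman f z₁ z) - Real.exp (-α * T)) * reDot d d)) ≤
      fderiv2 f (z + k) (s + d) (s + d) + fderiv2 f (z - k) (s - d) (s - d) := by
  have hjet := (((((hasJet2_bregman (z₁ := z₁) hz s).const_mul (-α)).exp.add
    (.const (-Real.exp (-α * T)))).mul (hasJet2_reDot_self k d)).const_mul δ).add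
    ((hasJet2_secondDiff hz hadd hsub (s := s) (d := d)).const_mul (-1))
  have hle := hjet.nonpos_of_isLocalMax ((isLocalMax_comp_add_smul hmax s d).congr
    (.of_forall fun t => by simp only [barrier]; ring))
  linarith

theorem add_I_smul_le_of_isLocalMax_barrier {ρ : ℝ} (hα : 0 ≤ α) (hδ : 0 ≤ δ)
    (hψ : bregman f z₁ z ≤ T) (hz : ContDiffAt ℝ 2 f z) (hadd : ContDiffAt ℝ 2 f (z + k))
    (hsub : ContDiffAt ℝ 2 f (z - k)) (hmax : IsLocalMax (barrier f z₁ α δ T) (z, k))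
    {s d : ι → ℂ} (hd : reDot d d ≤ reDot k k * ρ) :
    2 * (fderiv2 f z s s + fderiv2 f z (I • s) (I • s)) +
        δ * Real.exp (-α * bregman f z₁ z) * reDot k k *
          ((α ^ 2 - 2 * α) * ((fderiv ℝ f z - fderiv ℝ f z₁) s ^ 2 +
              (fderiv ℝ f z - fderiv ℝ f z₁) (I • s) ^ 2) -
            α * (fderiv2 f z s s + fderiv2 f z (I • s) (I • s)) - 2 * α * ρ) ≤
      fderiv2 f (z + k) (s + d) (s + d) + fderiv2 f (z - k) (s - d) (s - d) +
        (fderiv2 f (z + k) (I • s + I • d) (I • s + I • d) +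
          fderiv2 f (z - k) (I • s - I • d) (I • s - I • d)) := by
  have hs := le_fderiv2_of_isLocalMax_barrier hz hadd hsub hmax s d
  have hIs := le_fderiv2_of_isLocalMax_barrier hz hadd hsub hmax (I • s) (I • d)
  rw [reDot_I_smul_I_smul] at hIs
  set D := fderiv ℝ f z - fderiv ℝ f z₁
  set e := Real.exp (-α * bregman f z₁ z)
  have hweight : 0 ≤ δ * ((e - Real.exp (-α * T)) * reDot d d) :=
    mul_nonneg hδ (mul_nonneg (sub_nonneg.2 (Real.exp_le_exp.2
      (mul_le_mul_of_nonpos_left hψ (by linarith)))) (reDot_self_nonneg d))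
  have hcross : 2 * (D s * reDot k d + D (I • s) * reDot k (I • d)) ≤
      reDot k k * (D s ^ 2 + D (I • s) ^ 2 + ρ) := by
    linarith [two_mul_add_mul_reDot_I_smul_le (D s) (D (I • s)) k d]
  have hcoeff : 0 ≤ 2 * α * (δ * e) := by positivity
  linarith [mul_le_mul_of_nonneg_left hcross hcoeff]

end Barrier

section Trace

variable {ι : Type*} [Fintype ι]

theorem continuous_re_trace : Continuous fun A : Matrix ι ι ℂ => A.trace.re :=
  Complex.continuous_re.comp continuous_id.matrix_trace

theorem continuousOn_re_trace_mul {X : Type*} [TopologicalSpace X] {s : Set X}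
    {A B : X → Matrix ι ι ℂ} (hA : ContinuousOn A s) (hB : ContinuousOn B s) :
    ContinuousOn (fun q => (A q * B q).trace.re) s := by
  rw [continuousOn_iff_continuous_domRestrict] at *
  exact continuous_re_trace.comp (hA.matrix_mul hB)

end Trace

section StrictConvexity

variable {ι : Type*} [Fintype ι] [DecidableEq ι] {c : ℝ} {Ω K : Set (ι → ℂ)} {u : (ι → ℂ) → ℝ}
  {z₁ z k : ι → ℂ} {α δ T L r : ℝ}

/-- The average of the inverse complex Hessians of `u` at the two endpoints of a point pair. -/
def meanInvHessian (u : (ι → ℂ) → ℝ) (q : (ι → ℂ) × (ι → ℂ)) : Matrix ι ι ℂ :=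
  meanInv (complexHessian u (q.1 + q.2)) (complexHessian u (q.1 - q.2))

namespace IsKEPotential

section

open scoped Matrix.Norms.L2Operator

theorem contDiffOn_complexHessian (h : IsKEPotential c Ω u) :
    ContDiffOn ℝ 1 (complexHessian u) Ω := by
  let levi : ((ι → ℂ) →L[ℝ] (ι → ℂ) →L[ℝ] ℝ) →L[ℝ] Matrix ι ι ℂ :=
    ⟨leviMatrix, continuous_leviMatrix⟩
  exact levi.contDiff.comp_contDiffOn h.contDiffOn_fderiv2

theorem continuousOn_complexHessian (h : IsKEPotential c Ω u) :
    ContinuousOn (complexHessian u) Ω :=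
  continuous_leviMatrix.comp_continuousOn h.contDiffOn_fderiv2.continuousOn

theorem contDiffOn_complexHessian_inv (h : IsKEPotential c Ω u) :
    ContDiffOn ℝ 1 (fun z => (complexHessian u z)⁻¹) Ω :=
  contDiffOn_matrix_inv h.contDiffOn_complexHessian fun z hz => (h.posDef z hz).isUnit

theorem exists_reDot_inv_sub_inv_mulVec_le (h : IsKEPotential c Ω u) (hK : IsCompact K)
    (hKc : Convex ℝ K) (hKΩ : K ⊆ Ω) : ∃ L : ℝ, ∀ q ∈ pointPairs K, ∀ w,
      reDot (((complexHessian u (q.1 + q.2))⁻¹ - (complexHessian u (q.1 - q.2))⁻¹) *ᵥ w)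
        (((complexHessian u (q.1 + q.2))⁻¹ - (complexHessian u (q.1 - q.2))⁻¹) *ᵥ w) ≤
      4 * L * reDot q.2 q.2 * reDot w w := by
  obtain ⟨L, hL0, hL⟩ := exists_reDot_sub_mulVec_le hK hKc
    (h.contDiffOn_complexHessian_inv.mono hKΩ)
  refine ⟨L, fun q hq w => (hL _ hq.1 _ hq.2 w).trans ?_⟩
  have hnorm : ‖q.1 + q.2 - (q.1 - q.2)‖ ^ 2 = 4 * ‖q.2‖ ^ 2 := by
    rw [show q.1 + q.2 - (q.1 - q.2) = (2 : ℝ) • q.2 by module, norm_smul]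
    norm_num [mul_pow]
  rw [hnorm, ← mul_assoc, mul_comm L]
  have := reDot_self_nonneg w
  gcongr
  exact norm_sq_le_reDot_self q.2

theorem continuousOn_meanInvHessian (h : IsKEPotential c Ω u) :
    ContinuousOn (meanInvHessian u) (pointPairs Ω) :=
  have hinv := h.contDiffOn_complexHessian_inv.continuousOn
  ((hinv.comp (continuous_fst.add continuous_snd).continuousOn fun _ hq => hq.1).add
    (hinv.comp (continuous_fst.sub continuous_snd).continuousOn fun _ hq => hq.2)).const_smul
    (2⁻¹ : ℝ)

theorem posDef_meanInvHessian (h : IsKEPotential c Ω u) {q : (ι → ℂ) × (ι → ℂ)}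
    (hq : q ∈ pointPairs Ω) : (meanInvHessian u q).PosDef :=
  posDef_meanInv (h.posDef _ hq.1) (h.posDef _ hq.2)

theorem continuousOn_meanInvHessian_inv (h : IsKEPotential c Ω u) :
    ContinuousOn (fun q => (meanInvHessian u q)⁻¹) (pointPairs Ω) := by
  simp only [nonsing_inv_eq_ringInverse]
  intro q hq
  obtain ⟨U, hU⟩ := (h.posDef_meanInvHessian hq).isUnit
  have hinv : ContinuousAt Ring.inverse (meanInvHessian u q) :=
    hU ▸ NormedRing.inverse_continuousAt U
  exact hinv.comp_continuousWithinAt (h.continuousOn_meanInvHessian q hq)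

end

theorem fderiv_sub_pos (h : IsKEPotential c Ω u)
    (hcenter : ∀ z ∈ Ω, reDot (z - z₁) (z - z₁) ≤ bregman u z₁ z) (hz₁ : z₁ ∈ Ω) (hz : z ∈ Ω)
    (hne : z - z₁ ≠ 0) : 0 < (fderiv ℝ u z - fderiv ℝ u z₁) (z - z₁) :=
  (reDot_self_pos hne).trans_le ((hcenter z hz).trans (bregman_le_fderiv_sub_of_convexOn
    h.convexOn hz₁ hz ((h.contDiffAt hz).differentiableAt two_ne_zero)))

theorem mul_re_trace_le_of_isLocalMax_barrier (h : IsKEPotential c Ω u) (hα : 0 ≤ α) (hδ : 0 ≤ δ)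
    (hq : (z, k) ∈ pointPairs Ω) (hψ : bregman u z₁ z ≤ T)
    (hL : ∀ w, reDot (((complexHessian u (z + k))⁻¹ - (complexHessian u (z - k))⁻¹) *ᵥ w)
      (((complexHessian u (z + k))⁻¹ - (complexHessian u (z - k))⁻¹) *ᵥ w) ≤
      4 * L * reDot k k * reDot w w)
    (hmax : IsLocalMax (barrier u z₁ α δ T) (z, k)) :
    δ * Real.exp (-α * bregman u z₁ z) * reDot k k *
      ((α ^ 2 - 2 * α) *
          (meanInvHessian u (z, k) * leviSq (fderiv ℝ u z - fderiv ℝ u z₁)).trace.re -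
        α * ((meanInvHessian u (z, k) * complexHessian u z).trace.re +
          L / 2 * (meanInvHessian u (z, k))⁻¹.trace.re)) ≤ c * secondDiff u z k := by
  have hz : z ∈ Ω := fst_mem_of_mem_pointPairs h.convex hq
  set κ := δ * Real.exp (-α * bregman u z₁ z) * reDot k k
  set D := fderiv ℝ u z - fderiv ℝ u z₁
  set S := meanInvHessian u (z, k) with hSdef
  have hS : S.PosDef := h.posDef_meanInvHessian hq
  set M := (α ^ 2 - 2 * α) • leviSq D - α • complexHessian u z with hM
  have hMh : M.IsHermitian := (Matrix.IsHermitian.smul (posSemidef_leviSq D).isHermitian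
    (.all _)).sub ((h.posDef z hz).isHermitian.smul (.all _))
  have hYh : ((κ / 2) • (S * M * S - (α / 2 * L) • 1)).IsHermitian :=
    ((hS.isHermitian.eq ▸ isHermitian_conjTranspose_mul_mul S hMh :).sub
      (isHermitian_one.smul (.all _))).smul (.all _)
  have hle := h.add_re_trace_le hq.1 hq.2 (h.posDef z hz) hYh (h.det_eq z hz)
    fun w s d hs hd => by
      have hSw : S *ᵥ w = s := by
        rw [hSdef, meanInvHessian, meanInv, smul_mulVec, add_mulVec, ← hs, ← hd]; module
      refine le_trans (le_of_eq ?_) (add_I_smul_le_of_isLocalMax_barrier hα hδ hψ (h.contDiffAt hz)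
        (h.contDiffAt hq.1) (h.contDiffAt hq.2) hmax
        (reDot_self_le_of_reDot_sub_mulVec_le (hL w) hs hd))
      rw [smul_mulVec, reDot_smul_right, sub_mulVec, reDot_sub_right,
        reDot_mulVec_conj hS.isHermitian, hSw, hM, sub_mulVec, reDot_sub_right]
      simp only [smul_mulVec, one_mulVec, reDot_smul_right]
      rw [reDot_leviSq_mulVec, complexHessian, reDot_leviMatrix_mulVec]
      ring
  have htrace : (S⁻¹ * ((κ / 2) • (S * M * S - (α / 2 * L) • 1))).trace.re =
      κ / 2 * ((α ^ 2 - 2 * α) * (S * leviSq D).trace.re -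
        α * (S * complexHessian u z).trace.re - α / 2 * L * S⁻¹.trace.re) := by
    rw [Matrix.mul_smul, mul_sub, Matrix.mul_assoc S,
      nonsing_inv_mul_cancel_left _ _ (isUnit_det_of_posDef hS), trace_smul, trace_sub,
      trace_mul_comm M]
    simp only [hM, mul_sub, Matrix.mul_smul, mul_one, trace_sub, trace_smul, sub_re, real_smul,
      re_ofReal_mul]
  change c * u z + (S⁻¹ * _).trace.re ≤ _ at hle
  rw [htrace] at hle
  rw [secondDiff]
  linarith

end IsKEPotential

namespace IsKEPotential

theorem exists_forall_le_re_trace (h : IsKEPotential c Ω u)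
    (hcenter : ∀ z ∈ Ω, reDot (z - z₁) (z - z₁) ≤ bregman u z₁ z) (hz₁ : z₁ ∈ Ω)
    (hK : IsCompact K) (hKΩ : K ⊆ Ω) (hr : 0 < r) (L : ℝ) :
    ∃ α > 0, ∀ q ∈ pointPairs K, r ≤ ‖q.1 - z₁‖ → c ≤
      (α ^ 2 - 2 * α) *
          (meanInvHessian u q * leviSq (fderiv ℝ u q.1 - fderiv ℝ u z₁)).trace.re -
        α * ((meanInvHessian u q * complexHessian u q.1).trace.re +
          L / 2 * (meanInvHessian u q)⁻¹.trace.re) := by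
  have hsub : pointPairs K ∩ {q | r ≤ ‖q.1 - z₁‖} ⊆ pointPairs Ω :=
    Set.inter_subset_left.trans (pointPairs_mono hKΩ)
  have hmid : Set.MapsTo Prod.fst (pointPairs Ω) Ω := fun _ =>
    fst_mem_of_mem_pointPairs h.convex
  have hfderiv : ContinuousOn (fderiv ℝ u) Ω :=
    h.contDiffOn.continuousOn_fderiv_of_isOpen h.isOpen (by norm_num)
  have hleviSq : ContinuousOn (fun q : (ι → ℂ) × (ι → ℂ) =>
      leviSq (fderiv ℝ u q.1 - fderiv ℝ u z₁)) (pointPairs Ω) :=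
    continuous_leviSq.comp_continuousOn
      ((hfderiv.comp continuous_fst.continuousOn hmid).sub continuousOn_const)
  have hhess := h.continuousOn_complexHessian.comp continuous_fst.continuousOn hmid
  have hinv : ContinuousOn (fun q => (meanInvHessian u q)⁻¹.trace.re) (pointPairs Ω) :=
    continuous_re_trace.comp_continuousOn h.continuousOn_meanInvHessian_inv
  obtain ⟨α, hα, hle⟩ := exists_le_sq_sub_mul_sub_mul
    ((isCompact_pointPairs hK).inter_right
      (isClosed_le continuous_const (continuous_fst.sub continuous_const).norm))
    ((continuousOn_re_trace_mul h.continuousOn_meanInvHessian hleviSq).mono hsub)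
    (((continuousOn_re_trace_mul h.continuousOn_meanInvHessian hhess).add
      (continuousOn_const.mul hinv)).mono hsub)
    (fun q hq => re_trace_mul_pos (h.posDef_meanInvHessian (hsub hq)) (posSemidef_leviSq _)
      (leviSq_ne_zero (h.fderiv_sub_pos hcenter hz₁ (hmid (hsub hq))
        (norm_pos_iff.1 (hr.trans_le hq.2))).ne')) h.pos.le
  exact ⟨α, hα, fun q hq hqr => hle q ⟨hq, hqr⟩⟩

theorem barrier_nonpos_of_isLocalMax (h : IsKEPotential c Ω u) (hα : 0 < α) (hδ : 0 ≤ δ)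
    (hq : (z, k) ∈ pointPairs Ω)
    (hL : ∀ w, reDot (((complexHessian u (z + k))⁻¹ - (complexHessian u (z - k))⁻¹) *ᵥ w)
      (((complexHessian u (z + k))⁻¹ - (complexHessian u (z - k))⁻¹) *ᵥ w) ≤
      4 * L * reDot k k * reDot w w)
    (hc : c ≤ (α ^ 2 - 2 * α) *
          (meanInvHessian u (z, k) * leviSq (fderiv ℝ u z - fderiv ℝ u z₁)).trace.re -
        α * ((meanInvHessian u (z, k) * complexHessian u z).trace.re +
          L / 2 * (meanInvHessian u (z, k))⁻¹.trace.re))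
    (hmax : IsLocalMax (barrier u z₁ α δ T) (z, k)) : barrier u z₁ α δ T (z, k) ≤ 0 := by
  by_contra! hpos
  have hT := bregman_lt_of_barrier_pos hα hδ (h.secondDiff_nonneg hq.1 hq.2) hpos
  have hκ : 0 ≤ δ * Real.exp (-α * bregman u z₁ z) * reDot k k :=
    mul_nonneg (by positivity) (reDot_self_nonneg k)
  have hle := (mul_le_mul_of_nonneg_left hc hκ).trans
    (h.mul_re_trace_le_of_isLocalMax_barrier hα.le hδ hq hT.le hL hmax)
  rw [mul_comm] at hle
  have hκsd := le_of_mul_le_mul_left hle h.pos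
  have := mul_nonneg hδ (mul_nonneg (Real.exp_pos (-α * T)).le (reDot_self_nonneg k))
  rw [barrier] at hpos
  linarith

theorem continuousOn_barrier (h : IsKEPotential c Ω u) :
    ContinuousOn (barrier u z₁ α δ T) (pointPairs Ω) := by
  have hu := h.contDiffOn.continuousOn
  have hadd : ContinuousOn (fun q : (ι → ℂ) × (ι → ℂ) => u (q.1 + q.2)) (pointPairs Ω) :=
    hu.comp (by fun_prop) fun _ hq => hq.1
  have hsub : ContinuousOn (fun q : (ι → ℂ) × (ι → ℂ) => u (q.1 - q.2)) (pointPairs Ω) :=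
    hu.comp (by fun_prop) fun _ hq => hq.2
  have hmid : ContinuousOn (fun q : (ι → ℂ) × (ι → ℂ) => u q.1) (pointPairs Ω) :=
    hu.comp (by fun_prop) fun _ => fst_mem_of_mem_pointPairs h.convex
  have hreDot : Continuous fun q : (ι → ℂ) × (ι → ℂ) => reDot q.2 q.2 :=
    continuous_reDot_self.comp continuous_snd
  have hbregman : ContinuousOn (fun q : (ι → ℂ) × (ι → ℂ) => bregman u z₁ q.1) (pointPairs Ω) :=
    (hmid.sub continuousOn_const).sub (by fun_prop)
  exact (continuousOn_const.mul (((continuousOn_const.mul hbregman).rexp.sub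
    continuousOn_const).mul hreDot.continuousOn)).sub
    ((hadd.add hsub).sub (continuousOn_const.mul hmid))

theorem exists_le_mul_reDot_self_le_one (h : IsKEPotential c Ω u) {a : ℝ} (ha : 0 < a) :
    ∃ δ > 0, δ ≤ a ∧ ∀ q ∈ pointPairs Ω, δ * reDot q.2 q.2 ≤ 1 := by
  obtain ⟨R, hR⟩ := (isCompact_pointPairs h.isBounded.isCompact_closure).bddAbove_image
    (continuous_reDot_self.comp continuous_snd).continuousOn
  refine ⟨min a (max R 1)⁻¹, by positivity, min_le_left _ _, fun q hq => ?_⟩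
  have hqR : reDot q.2 q.2 ≤ R := hR ⟨q, pointPairs_mono subset_closure hq, rfl⟩
  calc min a (max R 1)⁻¹ * reDot q.2 q.2 ≤ (max R 1)⁻¹ * max R 1 :=
        mul_le_mul (min_le_right _ _) (hqR.trans (le_max_left _ _)) (reDot_self_nonneg _)
          (by positivity)
    _ = 1 := inv_mul_cancel₀ (by positivity)

theorem exists_forall_le_bregman_add (h : IsKEPotential c Ω u) (z₁ : ι → ℂ) :
    ∃ C, ∀ z ∈ Ω, u z ≤ bregman u z₁ z + C := by
  obtain ⟨C, hC⟩ := h.isBounded.isCompact_closure.bddAbove_image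
    (f := fun z => u z₁ + fderiv ℝ u z₁ (z - z₁)) (by fun_prop)
  refine ⟨C, fun z hz => ?_⟩
  have : u z₁ + fderiv ℝ u z₁ (z - z₁) ≤ C := hC ⟨z, subset_closure hz, rfl⟩
  rw [bregman]
  linarith

theorem exists_mem_pointPairs_of_barrier_pos (h : IsKEPotential c Ω u) (z₁ : ι → ℂ) (T : ℝ) :
    ∃ M, ∀ α > 0, ∀ δ ≥ 0, ∀ q ∈ pointPairs Ω, δ * reDot q.2 q.2 ≤ 1 → 0 ≤ bregman u z₁ q.1 →
      0 < barrier u z₁ α δ T q → q ∈ pointPairs {z ∈ Ω | u z ≤ M} := by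
  obtain ⟨m, hm⟩ := h.exists_le
  obtain ⟨C, hC⟩ := h.exists_forall_le_bregman_add z₁
  refine ⟨1 + 2 * (T + C) - m, fun α hα δ hδ q hq hq1 hψ hpos => ?_⟩
  have hT := bregman_lt_of_barrier_pos hα hδ (h.secondDiff_nonneg hq.1 hq.2) hpos
  have hsd := hpos.trans_le (barrier_le hα.le hδ hψ)
  have := hC q.1 (fst_mem_of_mem_pointPairs h.convex hq)
  have := hm _ hq.1
  have := hm _ hq.2
  rw [secondDiff] at hsd
  exact ⟨⟨hq.1, by linarith⟩, ⟨hq.2, by linarith⟩⟩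

theorem exists_barrier_nonpos (h : IsKEPotential c Ω u) (hne : Ω.Nonempty) :
    ∃ z₁, ∀ T, ∃ α > 0, ∃ δ > 0, ∀ q ∈ pointPairs Ω, barrier u z₁ α δ T q ≤ 0 := by
  obtain ⟨z₁, hz₁, hcenter, hpos⟩ := h.exists_center hne
  obtain ⟨r, hr, hball⟩ := h.exists_ball_reDot_self_le_fderiv2 hz₁ hpos
  obtain ⟨a, ha, hinner⟩ := h.exists_mul_reDot_self_le_secondDiff hr hball
  obtain ⟨δ, hδ, hδa, hδ1⟩ := h.exists_le_mul_reDot_self_le_one ha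
  refine ⟨z₁, fun T => ?_⟩
  obtain ⟨M, hM⟩ := h.exists_mem_pointPairs_of_barrier_pos z₁ T
  have hK := h.isCompact_sublevel M
  have hKΩ : {z ∈ Ω | u z ≤ M} ⊆ Ω := Set.sep_subset _ _
  obtain ⟨L, hL⟩ := h.exists_reDot_inv_sub_inv_mulVec_le hK (h.convex_sublevel M) hKΩ
  obtain ⟨α, hα, houter⟩ := h.exists_forall_le_re_trace hcenter hz₁ hK hKΩ (half_pos hr) L
  refine ⟨α, hα, δ, hδ, fun q₀ hq₀ => ?_⟩
  by_contra! hlt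
  have hψ : ∀ q ∈ pointPairs Ω, 0 ≤ bregman u z₁ q.1 := fun q hq =>
    (reDot_self_nonneg _).trans (hcenter q.1 (fst_mem_of_mem_pointPairs h.convex hq))
  obtain ⟨⟨z, k⟩, hq, hFq, hmax⟩ := exists_isLocalMax_of_pos (isCompact_pointPairs hK)
    (isOpen_pointPairs h.isOpen) (pointPairs_mono hKΩ) h.continuousOn_barrier
    (fun q hq => hM α hα δ hδ.le q hq (hδ1 q hq) (hψ q hq)) hq₀ hlt
  have hqΩ := pointPairs_mono hKΩ hq
  rcases le_total ‖z - z₁‖ (r / 2) with hz | hz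
  · have hle := hFq.trans_le (barrier_le hα.le hδ.le (hψ _ hqΩ))
    have := hinner z k hz hqΩ.1 hqΩ.2
    have := mul_le_mul_of_nonneg_right hδa (reDot_self_nonneg k)
    linarith
  · exact (h.barrier_nonpos_of_isLocalMax hα hδ.le hqΩ (hL (z, k) hq) (houter (z, k) hq hz)
      hmax).not_gt hFq

theorem fderiv2_pos (h : IsKEPotential c Ω u) (hz : z ∈ Ω) (hk : k ≠ 0) :
    0 < fderiv2 u z k k := by
  obtain ⟨z₁, hz₁⟩ := h.exists_barrier_nonpos ⟨z, hz⟩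
  obtain ⟨α, hα, δ, hδ, hle⟩ := hz₁ (bregman u z₁ z + 1)
  have hweight : 0 <
      Real.exp (-α * bregman u z₁ z) - Real.exp (-α * (bregman u z₁ z + 1)) :=
    sub_pos.2 (Real.exp_lt_exp.2 (by linarith))
  refine (mul_pos hδ (mul_pos hweight (reDot_self_pos hk))).trans_le
    (le_fderiv2_of_mul_sq_le_secondDiff (h.contDiffAt hz) ?_)
  filter_upwards [h.eventually_add_smul_mem hz k] with t ht
  have hbarrier := hle (z, t • k) ht
  rw [barrier, reDot_smul_left, reDot_smul_right] at hbarrier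
  linarith

end IsKEPotential
end StrictConvexity

theorem strict_convexity_of_KE_potential_general {n : ℕ} {Ω : Set (Fin n → ℂ)} (hΩo : IsOpen Ω)
    (hΩb : Bornology.IsBounded Ω) (hΩc : Convex ℝ Ω) {u : (Fin n → ℂ) → ℝ}
    (hu : ContDiffOn ℝ 3 u Ω) (hpsh : ∀ z ∈ Ω, (hessA u z).PosDef) {c : ℝ} (hc : 0 < c)
    (hKE : ∀ z ∈ Ω, (hessA u z).det = (Real.exp (c * u z) : ℂ))
    (hblow : ∀ p ∈ frontier Ω, Filter.Tendsto u (nhdsWithin p Ω) Filter.atTop) :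
    ∀ z ∈ Ω, (realHess u z).PosDef := by
  have hdiff : ∀ z ∈ Ω, ContDiffAt ℝ 2 u z := fun z hz =>
    (hu.contDiffAt (hΩo.mem_nhds hz)).of_le (by norm_num)
  have hhess : ∀ z ∈ Ω, complexHessian u z = (hessA u z)ᵀ := fun z hz =>
    (transpose_hessA (hdiff z hz)).symm
  have h : IsKEPotential c Ω u :=
    { pos := hc
      isOpen := hΩo
      isBounded := hΩb
      convex := hΩc
      contDiffOn := hu
      posDef := fun z hz => hhess z hz ▸ (hpsh z hz).transpose
      det_eq := fun z hz => by rw [hhess z hz, det_transpose, hKE z hz]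
      tendsto := hblow }
  exact fun z hz => posDef_realHess (hdiff z hz) fun k hk => h.fderiv2_pos hz hk

theorem strict_convexity_of_KE_potential (n : ℕ) (hn : 1 ≤ n)
    (Ω : Set (Fin n → ℂ)) (hΩo : IsOpen Ω) (hΩb : Bornology.IsBounded Ω)
    (hΩsc : StrictConvex ℝ Ω)
    (hΩsmooth : ∃ ρ : (Fin n → ℂ) → ℝ, ContDiff ℝ (⊤ : ℕ∞) ρ ∧
      Ω = {z | ρ z < 0} ∧ frontier Ω = {z | ρ z = 0} ∧
      ∀ z ∈ frontier Ω, fderiv ℝ ρ z ≠ 0)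
    (u : (Fin n → ℂ) → ℝ) (hu : ContDiffOn ℝ (⊤ : ℕ∞) u Ω)
    (hpsh : ∀ z ∈ Ω, (hessA u z).PosDef)
    (hKE : ∀ z ∈ Ω, (hessA u z).det = (Real.exp ((n + 1) * u z) : ℂ))
    (hblow : ∀ p ∈ frontier Ω, Filter.Tendsto u (nhdsWithin p Ω) Filter.atTop)
    (v : (Fin n → ℂ) → ℝ) (hv2 : ContDiffOn ℝ 2 v (closure Ω))
    (hvu : ∀ z ∈ Ω, v z = Real.exp (-u z))
    (hv0 : ∀ z ∈ frontier Ω, v z = 0) :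
    ∀ z ∈ Ω, (realHess u z).PosDef := by
  have hu3 : ContDiffOn ℝ 3 u Ω := hu.of_le (WithTop.coe_le_coe.2 (le_top : (3 : ℕ∞) ≤ ⊤))
  exact strict_convexity_of_KE_potential_general hΩo hΩb hΩsc.convex hu3 hpsh (by positivity) hKE
    hblow

end
end

section
/- Let u be a smooth strictly plurisubharmonic function on an open set Ω ⊆ ℂ^n satisfying det(u_{ij̄}) = e^{(n+1)u} on Ω, and set A = (u_{ij̄}). Then u^{ij̄} ∂_{j̄}( (Ā)⁻¹ · ∂_i Ā ) = (n+1)·I on Ω (summation over i, j), where I is the n×n identity matrix. -/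
open Complex Matrix
open scoped ComplexOrder

noncomputable section

/- Write `P = Ā`, so that `P_{rq} = ∂_{r̄} ∂_q u`. For every invertible `P`,
`∂_{j̄}(P⁻¹ ∂_i P) = P⁻¹ R_{ij̄}` with `R_{ij̄} = ∂_{j̄} ∂_i P - ∂_{j̄}P · P⁻¹ · ∂_i P`. As the
entries of `P` are second derivatives of one function, `R` has the Kähler symmetry
`(R_{ij̄})_{rq} = (R_{qr̄})_{ji}`, so contracting `(i, j)` against `u^{ij̄} = (P⁻¹)_{ij}` gives
`tr (P⁻¹ R_{qr̄}) = ∂_{r̄} tr (P⁻¹ ∂_q P) = ∂_{r̄} ∂_q log det P`, which by the Monge-Ampère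
equation is `(n+1) P_{rq}`. Hence the sum is `P⁻¹ · (n+1) P`. -/

open Filter Topology
open scoped ContDiff Matrix.Norms.Operator

section ComplexifiedDerivative

variable {E V W R : Type*} [NormedAddCommGroup E] [NormedSpace ℝ E]
  [NormedAddCommGroup V] [NormedSpace ℂ V] [NormedAddCommGroup W] [NormedSpace ℂ W]
  [NormedRing R] [NormedAlgebra ℂ R] {ξ η : E × E} {z : E}

/-- The derivative of `f` along the complexified tangent vector `ξ.1 + √-1 ξ.2 ∈ E ⊗ ℂ`; both
Wirtinger derivatives are of this form. -/
def cdirDeriv (ξ : E × E) (f : E → V) (z : E) : V :=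
  fderiv ℝ f z ξ.1 + I • fderiv ℝ f z ξ.2

lemma cdirDeriv_congr {f g : E → V} (h : f =ᶠ[𝓝 z] g) :
    cdirDeriv ξ f =ᶠ[𝓝 z] cdirDeriv ξ g := by
  filter_upwards [h.fderiv (𝕜 := ℝ)] with w hw
  simp only [cdirDeriv, hw]

lemma cdirDeriv_comp {f : E → V} {g : V → W} {g' : V →L[ℂ] W}
    (hg : HasFDerivAt g g' (f z)) (hf : DifferentiableAt ℝ f z) :
    cdirDeriv ξ (fun w => g (f w)) z = g' (cdirDeriv ξ f z) := by
  have h : fderiv ℝ (fun w => g (f w)) z = (g'.restrictScalars ℝ).comp (fderiv ℝ f z) :=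
    ((hg.restrictScalars ℝ).comp z hf.hasFDerivAt).fderiv
  simp [cdirDeriv, h]

lemma cdirDeriv_conj (f : E → ℂ) :
    cdirDeriv ξ (fun w => starRingEnd ℂ (f w)) z =
      starRingEnd ℂ (cdirDeriv (ξ.1, -ξ.2) f z) := by
  have h : fderiv ℝ (fun w => starRingEnd ℂ (f w)) z =
      (conjCLE : ℂ →L[ℝ] ℂ).comp (fderiv ℝ f z) := conjCLE.comp_fderiv
  simp [cdirDeriv, h]

lemma cdirDeriv_mul {f g : E → R} (hf : DifferentiableAt ℝ f z) (hg : DifferentiableAt ℝ g z) :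
    cdirDeriv ξ (fun w => f w * g w) z = cdirDeriv ξ f z * g z + f z * cdirDeriv ξ g z := by
  have h (v : E) : fderiv ℝ (fun w => f w * g w) z v =
      f z * fderiv ℝ g z v + fderiv ℝ f z v * g z :=
    DFunLike.congr_fun (hf.hasFDerivAt.mul' hg.hasFDerivAt).fderiv v
  simp only [cdirDeriv, h, smul_add, add_mul, mul_add, smul_mul_assoc, mul_smul_comm]
  abel

lemma cdirDeriv_const_mul {f : E → R} (c : R) (hf : DifferentiableAt ℝ f z) :
    cdirDeriv ξ (fun w => c * f w) z = c * cdirDeriv ξ f z :=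
  cdirDeriv_comp (ContinuousLinearMap.mul ℂ R c).hasFDerivAt hf

lemma contDiffAt_cdirDeriv {m n : ℕ∞ω} {f : E → V} (hf : ContDiffAt ℝ n f z)
    (hmn : m + 1 ≤ n) : ContDiffAt ℝ m (cdirDeriv ξ f) z := by
  have h (v : E) : ContDiffAt ℝ m (fun w => fderiv ℝ f w v) z :=
    (hf.fderiv_right hmn).clm_apply contDiffAt_const
  exact (h ξ.1).add ((h ξ.2).const_smul I)

lemma differentiableAt_cdirDeriv {f : E → V} (hf : ContDiffAt ℝ 2 f z) :
    DifferentiableAt ℝ (cdirDeriv ξ f) z :=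
  (contDiffAt_cdirDeriv (m := 1) hf (by norm_num)).differentiableAt one_ne_zero

lemma cdirDeriv_comm {f : E → V} (hf : ContDiffAt ℝ 2 f z) :
    cdirDeriv ξ (cdirDeriv η f) z = cdirDeriv η (cdirDeriv ξ f) z := by
  have hd : DifferentiableAt ℝ (fderiv ℝ f) z :=
    (hf.fderiv_right (m := 1) (by norm_num)).differentiableAt one_ne_zero
  have hsymm : IsSymmSndFDerivAt ℝ f z := hf.isSymmSndFDerivAt (by simp)
  have hsnd (ζ : E × E) (v : E) : fderiv ℝ (cdirDeriv ζ f) z v =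
      fderiv ℝ (fderiv ℝ f) z v ζ.1 + I • fderiv ℝ (fderiv ℝ f) z v ζ.2 := by
    have happly (w : E) := hd.hasFDerivAt.clm_apply (hasFDerivAt_const w z)
    have h : fderiv ℝ (cdirDeriv ζ f) z = _ :=
      ((happly ζ.1).add ((happly ζ.2).const_smul I)).fderiv
    simp [h]
  rw [cdirDeriv, hsnd, hsnd, cdirDeriv, hsnd, hsnd, hsymm ξ.1 η.1, hsymm ξ.1 η.2,
    hsymm ξ.2 η.1, hsymm ξ.2 η.2]
  simp only [smul_add]
  abel

end ComplexifiedDerivative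

section MatrixCalculus

variable {E ι : Type*} [NormedAddCommGroup E] [NormedSpace ℝ E] [Fintype ι]
  {ξ η : E × E} {z : E} {P : E → Matrix ι ι ℂ}

lemma contDiffAt_matrix {n : ℕ∞ω} (hP : ∀ p q, ContDiffAt ℝ n (fun w => P w p q) z) :
    ContDiffAt ℝ n P z := by
  classical
  have hsum : P = fun w => ∑ p, ∑ q, P w p q • Matrix.single p q (1 : ℂ) := by
    funext w
    simpa using matrix_eq_sum_single (P w)
  rw [hsum]
  fun_prop

lemma cdirDeriv_matrix_apply (hP : DifferentiableAt ℝ P z) (p q : ι) :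
    cdirDeriv ξ P z p q = cdirDeriv ξ (fun w => P w p q) z :=
  (cdirDeriv_comp (entryLinearMap ℂ ℂ p q).toContinuousLinearMap.hasFDerivAt hP).symm

lemma cdirDeriv_trace (hP : DifferentiableAt ℝ P z) :
    cdirDeriv ξ (fun w => (P w).trace) z = (cdirDeriv ξ P z).trace :=
  cdirDeriv_comp (traceLinearMap ι ℂ ℂ).toContinuousLinearMap.hasFDerivAt hP

variable [DecidableEq ι]

lemma trace_adjugate_mul {R : Type*} [CommRing R] (M H : Matrix ι ι R) :
    (M.adjugate * H).trace = ∑ i, (M.updateRow i (H i)).det := by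
  rw [trace_mul_comm]
  refine Finset.sum_congr rfl fun i _ => ?_
  rw [← cramer_transpose_apply, cramer_eq_adjugate_mulVec, ← adjugate_transpose, mulVec_transpose]
  rfl

lemma hasFDerivAt_det {𝕜 : Type*} [NontriviallyNormedField 𝕜] [CompleteSpace 𝕜]
    (M : Matrix ι ι 𝕜) :
    HasFDerivAt (fun N : Matrix ι ι 𝕜 => N.det)
      (traceLinearMap ι 𝕜 𝕜 ∘ₗ LinearMap.mulLeft 𝕜 M.adjugate).toContinuousLinearMap M := by
  let D : ContinuousMultilinearMap 𝕜 (fun _ : ι => ι → 𝕜) 𝕜 :=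
    ⟨detRowAlternating.toMultilinearMap, continuous_id.matrix_det⟩
  have hD : HasFDerivAt (fun N : Matrix ι ι 𝕜 => N.det) (D.linearDeriv M) M := D.hasFDerivAt M
  refine hD.congr_fderiv (ContinuousLinearMap.ext fun H => ?_)
  exact (D.linearDeriv_apply M H).trans (trace_adjugate_mul M H).symm

lemma cdirDeriv_det (hP : DifferentiableAt ℝ P z) :
    cdirDeriv ξ (fun w => (P w).det) z = ((P z).adjugate * cdirDeriv ξ P z).trace :=
  cdirDeriv_comp (hasFDerivAt_det (P z)) hP

lemma hasFDerivAt_matrix_inv {𝕜 : Type*} [NontriviallyNormedField 𝕜] [CompleteSpace 𝕜]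
    {M : Matrix ι ι 𝕜} (hM : IsUnit M) :
    HasFDerivAt (fun N : Matrix ι ι 𝕜 => N⁻¹)
      (-ContinuousLinearMap.mulLeftRight 𝕜 (Matrix ι ι 𝕜) M⁻¹ M⁻¹) M := by
  have : @CompleteSpace (Matrix ι ι 𝕜) PseudoMetricSpace.toUniformSpace :=
    FiniteDimensional.complete 𝕜 _
  obtain ⟨U, rfl⟩ := hM
  simpa only [nonsing_inv_eq_ringInverse, Ring.inverse_unit] using
    hasFDerivAt_ringInverse (𝕜 := 𝕜) U

lemma differentiableAt_matrix_inv (hP : DifferentiableAt ℝ P z) (hz : IsUnit (P z)) :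
    DifferentiableAt ℝ (fun w => (P w)⁻¹) z :=
  (((hasFDerivAt_matrix_inv hz).restrictScalars ℝ).comp z hP.hasFDerivAt).differentiableAt

lemma cdirDeriv_matrix_inv (hP : DifferentiableAt ℝ P z) (hz : IsUnit (P z)) :
    cdirDeriv ξ (fun w => (P w)⁻¹) z = -((P z)⁻¹ * cdirDeriv ξ P z * (P z)⁻¹) := by
  simpa using cdirDeriv_comp (hasFDerivAt_matrix_inv hz) hP

/-- The curvature of the connection form `P⁻¹ ∂P` with its index lowered by `P`; for `P = Ā` and
`ξ = ∂_i`, `η = ∂_{j̄}`, this is up to sign the Chern curvature of the Kähler metric `A`. -/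
def loweredCurvature (ξ η : E × E) (P : E → Matrix ι ι ℂ) (z : E) : Matrix ι ι ℂ :=
  cdirDeriv η (cdirDeriv ξ P) z - cdirDeriv η P z * (P z)⁻¹ * cdirDeriv ξ P z

lemma differentiableAt_inv_mul_cdirDeriv (hP : ContDiffAt ℝ 2 P z) (hz : IsUnit (P z)) :
    DifferentiableAt ℝ (fun w => (P w)⁻¹ * cdirDeriv ξ P w) z :=
  (differentiableAt_matrix_inv (hP.differentiableAt two_ne_zero) hz).mul
    (differentiableAt_cdirDeriv hP)

lemma cdirDeriv_inv_mul_cdirDeriv (hP : ContDiffAt ℝ 2 P z) (hz : IsUnit (P z)) :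
    cdirDeriv η (fun w => (P w)⁻¹ * cdirDeriv ξ P w) z =
      (P z)⁻¹ * loweredCurvature ξ η P z := by
  have hP' : DifferentiableAt ℝ P z := hP.differentiableAt two_ne_zero
  rw [cdirDeriv_mul (differentiableAt_matrix_inv hP' hz) (differentiableAt_cdirDeriv hP),
    cdirDeriv_matrix_inv hP' hz, loweredCurvature]
  noncomm_ring

lemma cdirDeriv_trace_inv_mul_cdirDeriv (hP : ContDiffAt ℝ 2 P z) (hz : IsUnit (P z)) :
    cdirDeriv η (fun w => ((P w)⁻¹ * cdirDeriv ξ P w).trace) z =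
      ((P z)⁻¹ * loweredCurvature ξ η P z).trace := by
  rw [cdirDeriv_trace (differentiableAt_inv_mul_cdirDeriv hP hz),
    cdirDeriv_inv_mul_cdirDeriv hP hz]

lemma trace_inv_mul_cdirDeriv_of_det_eq_cexp {f : E → ℂ} {c : ℂ} (hP : DifferentiableAt ℝ P z)
    (hf : DifferentiableAt ℝ f z) (hdet : ∀ᶠ w in 𝓝 z, (P w).det = cexp (c * f w)) :
    ((P z)⁻¹ * cdirDeriv ξ P z).trace = c * cdirDeriv ξ f z := by
  have hexp : HasDerivAt (fun t => cexp (c * t)) (cexp (c * f z) * c) (f z) := by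
    simpa using ((hasDerivAt_id (f z)).const_mul c).cexp
  have h : ((P z).adjugate * cdirDeriv ξ P z).trace = (P z).det * (c * cdirDeriv ξ f z) := by
    rw [← cdirDeriv_det hP, (cdirDeriv_congr hdet).eq_of_nhds,
      cdirDeriv_comp hexp.hasFDerivAt hf, hdet.self_of_nhds]
    rw [ContinuousLinearMap.toSpanSingleton_apply, smul_eq_mul]
    ring
  have hne : (P z).det ≠ 0 := by simp [hdet.self_of_nhds]
  rw [Matrix.inv_def, Ring.inverse_eq_inv', smul_mul_assoc, trace_smul, h, smul_eq_mul,
    inv_mul_cancel_left₀ hne]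

end MatrixCalculus

section MixedHessian

variable {E ι : Type*} [NormedAddCommGroup E] [NormedSpace ℝ E] {ξ η : ι → E × E} {z : E}
  {f : E → ℂ} {c : ℂ}

/-- The matrix `(∂_{η r} ∂_{ξ q} f)_{rq}`; for real `f`, `η = ∂̄` and `ξ = ∂` it is `Ā`, the
transpose of the complex Hessian. -/
def mixedHessian (ξ η : ι → E × E) (f : E → ℂ) (z : E) : Matrix ι ι ℂ :=
  Matrix.of fun r q => cdirDeriv (η r) (cdirDeriv (ξ q) f) z

lemma contDiffAt_mixedHessian_apply {m : ℕ∞ω} (hf : ContDiffAt ℝ (m + 2) f z) (r q : ι) :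
    ContDiffAt ℝ m (fun w => mixedHessian ξ η f w r q) z :=
  contDiffAt_cdirDeriv (contDiffAt_cdirDeriv (m := m + 1) hf (by rw [add_assoc]; norm_num)) le_rfl

lemma cdirDeriv_mixedHessian_symm_left (hf : ContDiffAt ℝ 3 f z) (j r q : ι) :
    cdirDeriv (η j) (fun w => mixedHessian ξ η f w r q) z =
      cdirDeriv (η r) (fun w => mixedHessian ξ η f w j q) z :=
  cdirDeriv_comm (contDiffAt_cdirDeriv hf (by norm_num))

lemma cdirDeriv_mixedHessian_symm_right (hf : ContDiffAt ℝ 3 f z) (i r q : ι) :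
    cdirDeriv (ξ i) (fun w => mixedHessian ξ η f w r q) z =
      cdirDeriv (ξ q) (fun w => mixedHessian ξ η f w r i) z := by
  have hcomm (q : ι) : (fun w => mixedHessian ξ η f w r q) =ᶠ[𝓝 z]
      cdirDeriv (ξ q) (cdirDeriv (η r) f) := by
    filter_upwards [hf.eventually (by simp)] with w hw
    exact cdirDeriv_comm (hw.of_le (by norm_num))
  rw [(cdirDeriv_congr (hcomm q)).eq_of_nhds, (cdirDeriv_congr (hcomm i)).eq_of_nhds]
  exact cdirDeriv_comm (contDiffAt_cdirDeriv hf (by norm_num))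

lemma cdirDeriv_cdirDeriv_mixedHessian_symm (hf : ContDiffAt ℝ 4 f z) (i j r q : ι) :
    cdirDeriv (η j) (cdirDeriv (ξ i) fun w => mixedHessian ξ η f w r q) z =
      cdirDeriv (η r) (cdirDeriv (ξ q) fun w => mixedHessian ξ η f w j i) z := by
  have hf3 : ∀ᶠ w in 𝓝 z, ContDiffAt ℝ 3 f w :=
    (hf.eventually (by simp)).mono fun w hw => hw.of_le (by norm_num)
  have hentry (r : ι) : ContDiffAt ℝ 2 (fun w => mixedHessian ξ η f w r i) z :=
    contDiffAt_mixedHessian_apply (hf.of_le (by norm_num)) r i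
  calc cdirDeriv (η j) (cdirDeriv (ξ i) fun w => mixedHessian ξ η f w r q) z
    _ = cdirDeriv (η j) (cdirDeriv (ξ q) fun w => mixedHessian ξ η f w r i) z :=
      (cdirDeriv_congr <| hf3.mono fun _ hw =>
        cdirDeriv_mixedHessian_symm_right hw i r q).eq_of_nhds
    _ = cdirDeriv (ξ q) (cdirDeriv (η j) fun w => mixedHessian ξ η f w r i) z :=
      cdirDeriv_comm (hentry r)
    _ = cdirDeriv (ξ q) (cdirDeriv (η r) fun w => mixedHessian ξ η f w j i) z :=
      (cdirDeriv_congr <| hf3.mono fun _ hw =>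
        cdirDeriv_mixedHessian_symm_left hw j r i).eq_of_nhds
    _ = cdirDeriv (η r) (cdirDeriv (ξ q) fun w => mixedHessian ξ η f w j i) z :=
      cdirDeriv_comm (hentry j)

variable [Fintype ι]

lemma contDiffAt_mixedHessian {m : ℕ∞ω} (hf : ContDiffAt ℝ (m + 2) f z) :
    ContDiffAt ℝ m (mixedHessian ξ η f) z :=
  contDiffAt_matrix (contDiffAt_mixedHessian_apply hf)

variable [DecidableEq ι]

lemma loweredCurvature_mixedHessian_symm (hf : ContDiffAt ℝ 4 f z) (i j r q : ι) :
    loweredCurvature (ξ i) (η j) (mixedHessian ξ η f) z r q =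
      loweredCurvature (ξ q) (η r) (mixedHessian ξ η f) z j i := by
  have hP : ContDiffAt ℝ 2 (mixedHessian ξ η f) z :=
    contDiffAt_mixedHessian (hf.of_le (by norm_num))
  have hP' : DifferentiableAt ℝ (mixedHessian ξ η f) z := hP.differentiableAt two_ne_zero
  have hf3 : ContDiffAt ℝ 3 f z := hf.of_le (by norm_num)
  have hfourth (i j r q : ι) : cdirDeriv (η j) (cdirDeriv (ξ i) (mixedHessian ξ η f)) z r q =
      cdirDeriv (η j) (cdirDeriv (ξ i) fun w => mixedHessian ξ η f w r q) z := by
    rw [cdirDeriv_matrix_apply (differentiableAt_cdirDeriv hP)]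
    refine (cdirDeriv_congr ?_).eq_of_nhds
    filter_upwards [hP.eventually (by simp)] with w hw
    exact cdirDeriv_matrix_apply (hw.differentiableAt two_ne_zero) r q
  have hleft (a : ι) : cdirDeriv (η j) (mixedHessian ξ η f) z r a =
      cdirDeriv (η r) (mixedHessian ξ η f) z j a := by
    simp only [cdirDeriv_matrix_apply hP', cdirDeriv_mixedHessian_symm_left hf3 j r a]
  have hright (b : ι) : cdirDeriv (ξ i) (mixedHessian ξ η f) z b q =
      cdirDeriv (ξ q) (mixedHessian ξ η f) z b i := by
    simp only [cdirDeriv_matrix_apply hP', cdirDeriv_mixedHessian_symm_right hf3 i b q]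
  simp only [loweredCurvature, Matrix.sub_apply, Matrix.mul_apply, hfourth, hleft, hright,
    cdirDeriv_cdirDeriv_mixedHessian_symm hf i j r q]

lemma sum_inv_smul_loweredCurvature_mixedHessian (hf : ContDiffAt ℝ 4 f z) :
    ∑ i, ∑ j, (mixedHessian ξ η f z)⁻¹ i j •
        loweredCurvature (ξ i) (η j) (mixedHessian ξ η f) z =
      Matrix.of fun r q =>
        ((mixedHessian ξ η f z)⁻¹ *
          loweredCurvature (ξ q) (η r) (mixedHessian ξ η f) z).trace := by
  ext r q
  simp only [Matrix.sum_apply, Matrix.smul_apply, smul_eq_mul, Matrix.of_apply, Matrix.trace,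
    Matrix.diag, Matrix.mul_apply, loweredCurvature_mixedHessian_symm hf _ _ r q]

lemma trace_inv_mul_loweredCurvature_mixedHessian (hf : ContDiffAt ℝ 4 f z)
    (hdet : ∀ᶠ w in 𝓝 z, (mixedHessian ξ η f w).det = cexp (c * f w)) (r q : ι) :
    ((mixedHessian ξ η f z)⁻¹ * loweredCurvature (ξ q) (η r) (mixedHessian ξ η f) z).trace =
      c * mixedHessian ξ η f z r q := by
  have hP : ContDiffAt ℝ 2 (mixedHessian ξ η f) z :=
    contDiffAt_mixedHessian (hf.of_le (by norm_num))
  have hunit : IsUnit (mixedHessian ξ η f z) := by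
    simp [isUnit_iff_isUnit_det, hdet.self_of_nhds]
  have hlogdet : (fun w => ((mixedHessian ξ η f w)⁻¹ *
      cdirDeriv (ξ q) (mixedHessian ξ η f) w).trace) =ᶠ[𝓝 z]
      fun w => c * cdirDeriv (ξ q) f w := by
    filter_upwards [hP.eventually (by simp), hf.eventually (by simp), hdet.eventually_nhds]
      with w hPw hfw hw
    exact trace_inv_mul_cdirDeriv_of_det_eq_cexp (hPw.differentiableAt two_ne_zero)
      (hfw.differentiableAt four_ne_zero) hw
  rw [← cdirDeriv_trace_inv_mul_cdirDeriv hP hunit, (cdirDeriv_congr hlogdet).eq_of_nhds]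
  exact cdirDeriv_const_mul c (differentiableAt_cdirDeriv (hf.of_le (by norm_num)))

theorem sum_inv_smul_cdirDeriv_inv_mul_cdirDeriv_mixedHessian (hf : ContDiffAt ℝ 4 f z)
    (hdet : ∀ᶠ w in 𝓝 z, (mixedHessian ξ η f w).det = cexp (c * f w)) :
    ∑ i, ∑ j, (mixedHessian ξ η f z)⁻¹ i j •
        cdirDeriv (η j) (fun w => (mixedHessian ξ η f w)⁻¹ *
          cdirDeriv (ξ i) (mixedHessian ξ η f) w) z =
      c • (1 : Matrix ι ι ℂ) := by
  set P := mixedHessian ξ η f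
  have hP : ContDiffAt ℝ 2 P z := contDiffAt_mixedHessian (hf.of_le (by norm_num))
  have hunit : IsUnit (P z) := by simp [isUnit_iff_isUnit_det, hdet.self_of_nhds]
  have hcontract : ∑ i, ∑ j, (P z)⁻¹ i j • loweredCurvature (ξ i) (η j) P z = c • P z := by
    rw [sum_inv_smul_loweredCurvature_mixedHessian hf]
    ext r q
    exact trace_inv_mul_loweredCurvature_mixedHessian hf hdet r q
  calc ∑ i, ∑ j, (P z)⁻¹ i j • cdirDeriv (η j) (fun w => (P w)⁻¹ * cdirDeriv (ξ i) P w) z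
    _ = (P z)⁻¹ * ∑ i, ∑ j, (P z)⁻¹ i j • loweredCurvature (ξ i) (η j) P z := by
      simp_rw [cdirDeriv_inv_mul_cdirDeriv hP hunit, ← mul_smul_comm, ← Finset.mul_sum]
    _ = (P z)⁻¹ * (c • P z) := by rw [hcontract]
    _ = c • (1 : Matrix ι ι ℂ) := by
      rw [mul_smul_comm, nonsing_inv_mul _ ((isUnit_iff_isUnit_det _).1 hunit)]

end MixedHessian

section Wirtinger

variable {n : ℕ} {u : (Fin n → ℂ) → ℝ} {z : Fin n → ℂ}

/-- The complexified tangent vector `∂/∂z_j = (∂/∂x_j - √-1 ∂/∂y_j) / 2`. -/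
def dzDir (j : Fin n) : (Fin n → ℂ) × (Fin n → ℂ) :=
  ((2⁻¹ : ℝ) • Pi.single j 1, -((2⁻¹ : ℝ) • Pi.single j I))

/-- The complexified tangent vector `∂/∂z̄_j = (∂/∂x_j + √-1 ∂/∂y_j) / 2`. -/
def dzbarDir (j : Fin n) : (Fin n → ℂ) × (Fin n → ℂ) :=
  ((2⁻¹ : ℝ) • Pi.single j 1, (2⁻¹ : ℝ) • Pi.single j I)

lemma wdz_eq_cdirDeriv (f : (Fin n → ℂ) → ℂ) (j : Fin n) : wdz f j = cdirDeriv (dzDir j) f := by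
  funext z
  simp only [wdz, cdirDeriv, dzDir, map_neg, map_smul, real_smul, smul_eq_mul]
  push_cast
  ring

lemma wdzbar_eq_cdirDeriv (f : (Fin n → ℂ) → ℂ) (j : Fin n) :
    wdzbar f j = cdirDeriv (dzbarDir j) f := by
  funext z
  simp only [wdzbar, cdirDeriv, dzbarDir, map_smul, real_smul, smul_eq_mul]
  push_cast
  ring

lemma mwdz_eq_cdirDeriv {P : (Fin n → ℂ) → Matrix (Fin n) (Fin n) ℂ}
    (hP : DifferentiableAt ℝ P z) (j : Fin n) : mwdz P j z = cdirDeriv (dzDir j) P z := by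
  ext p q
  simp only [mwdz, wdz_eq_cdirDeriv, Matrix.of_apply, cdirDeriv_matrix_apply hP]

lemma mwdzbar_eq_cdirDeriv {P : (Fin n → ℂ) → Matrix (Fin n) (Fin n) ℂ}
    (hP : DifferentiableAt ℝ P z) (j : Fin n) : mwdzbar P j z = cdirDeriv (dzbarDir j) P z := by
  ext p q
  simp only [mwdzbar, wdzbar_eq_cdirDeriv, Matrix.of_apply, cdirDeriv_matrix_apply hP]

lemma mwdzbar_inv_mul_mwdz {P : (Fin n → ℂ) → Matrix (Fin n) (Fin n) ℂ}
    (hP : ContDiffAt ℝ 2 P z) (hz : IsUnit (P z)) (i j : Fin n) :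
    mwdzbar (fun w => (P w)⁻¹ * mwdz P i w) j z =
      cdirDeriv (dzbarDir j) (fun w => (P w)⁻¹ * cdirDeriv (dzDir i) P w) z := by
  have h : (fun w => (P w)⁻¹ * mwdz P i w) =ᶠ[𝓝 z]
      fun w => (P w)⁻¹ * cdirDeriv (dzDir i) P w := by
    filter_upwards [hP.eventually (by simp)] with w hw
    rw [mwdz_eq_cdirDeriv (hw.differentiableAt two_ne_zero)]
  rw [mwdzbar_eq_cdirDeriv
    ((differentiableAt_inv_mul_cdirDeriv hP hz).congr_of_eventuallyEq h),
    (cdirDeriv_congr h).eq_of_nhds]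

lemma mconj_hessA (u : (Fin n → ℂ) → ℝ) (z : Fin n → ℂ) :
    mconj (hessA u z) = mixedHessian dzDir dzbarDir (cplx u) z := by
  have hdz (j : Fin n) (f : (Fin n → ℂ) → ℂ) (w : Fin n → ℂ) :
      starRingEnd ℂ (cdirDeriv (dzDir j) f w) =
        cdirDeriv (dzbarDir j) (fun x => starRingEnd ℂ (f x)) w := by
    rw [cdirDeriv_conj]
    rfl
  have hdzbar (j : Fin n) (f : (Fin n → ℂ) → ℂ) (w : Fin n → ℂ) :
      starRingEnd ℂ (cdirDeriv (dzbarDir j) f w) =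
        cdirDeriv (dzDir j) (fun x => starRingEnd ℂ (f x)) w := by
    rw [cdirDeriv_conj, dzDir, neg_neg]
    rfl
  have hreal : (fun x => starRingEnd ℂ (cplx u x)) = cplx u := funext fun x => conj_ofReal (u x)
  ext p q
  simp only [mconj, hessA, mixedHessian, wdz_eq_cdirDeriv, wdzbar_eq_cdirDeriv, map_apply,
    Matrix.of_apply, hdz, hdzbar, hreal]

lemma hessA_eq_transpose (hu : ContDiffAt ℝ 2 (cplx u) z) :
    hessA u z = (mixedHessian dzDir dzbarDir (cplx u) z)ᵀ := by
  ext p q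
  simp only [hessA, mixedHessian, wdz_eq_cdirDeriv, wdzbar_eq_cdirDeriv, Matrix.of_apply,
    transpose_apply]
  exact cdirDeriv_comm hu

end Wirtinger

theorem trace_AinvbarDA_eq_id_general {n : ℕ} {u : (Fin n → ℂ) → ℝ} {z : Fin n → ℂ} {c : ℝ}
    (hu : ContDiffAt ℝ 4 u z)
    (hKE : ∀ᶠ w in 𝓝 z, (hessA u w).det = (Real.exp (c * u w) : ℂ)) :
    ∑ i, ∑ j, uInv u z i j •
        mwdzbar (fun w => (mconj (hessA u w))⁻¹ *
          mwdz (fun w' => mconj (hessA u w')) i w) j z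
      = (c : ℂ) • (1 : Matrix (Fin n) (Fin n) ℂ) := by
  have hf : ContDiffAt ℝ 4 (cplx u) z := ofRealCLM.contDiff.contDiffAt.comp z hu
  have hA : ∀ᶠ w in 𝓝 z, hessA u w = (mixedHessian dzDir dzbarDir (cplx u) w)ᵀ :=
    (hf.eventually (by simp)).mono fun w hw => hessA_eq_transpose (hw.of_le (by norm_num))
  have hdet : ∀ᶠ w in 𝓝 z,
      (mixedHessian dzDir dzbarDir (cplx u) w).det = cexp (c * cplx u w) := by
    filter_upwards [hA, hKE] with w hAw hw
    rw [← det_transpose, ← hAw, hw, cplx]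
    push_cast
    rfl
  have hunit : IsUnit (mixedHessian dzDir dzbarDir (cplx u) z) := by
    simp [isUnit_iff_isUnit_det, hdet.self_of_nhds]
  have hinv (i j : Fin n) :
      uInv u z i j = (mixedHessian dzDir dzbarDir (cplx u) z)⁻¹ i j := by
    rw [uInv, hA.self_of_nhds, ← transpose_nonsing_inv, transpose_apply]
  simp_rw [mconj_hessA, hinv,
    mwdzbar_inv_mul_mwdz (contDiffAt_mixedHessian (hf.of_le (by norm_num))) hunit]
  exact sum_inv_smul_cdirDeriv_inv_mul_cdirDeriv_mixedHessian hf hdet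

theorem trace_AinvbarDA_eq_id (n : ℕ) (Ω : Set (Fin n → ℂ)) (hΩ : IsOpen Ω)
    (u : (Fin n → ℂ) → ℝ) (hu : ContDiffOn ℝ (⊤ : ℕ∞) u Ω)
    (hpsh : ∀ z ∈ Ω, (hessA u z).PosDef)
    (hKE : ∀ z ∈ Ω, (hessA u z).det = (Real.exp ((n + 1) * u z) : ℂ)) :
    ∀ z ∈ Ω,
      ∑ i, ∑ j, uInv u z i j •
          mwdzbar (fun w => (mconj (hessA u w))⁻¹ *
            mwdz (fun w' => mconj (hessA u w')) i w) j z
        = ((n : ℂ) + 1) • (1 : Matrix (Fin n) (Fin n) ℂ) := by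
  intro z hz
  simpa using trace_AinvbarDA_eq_id_general (c := n + 1)
    ((hu.contDiffAt (hΩ.mem_nhds hz)).of_le ENat.LEInfty.out)
    (eventually_of_mem (hΩ.mem_nhds hz) hKE)

end
end

section
/- Let u be a smooth strictly plurisubharmonic function on an open set Ω ⊆ ℂ^n satisfying det(u_{ij̄}) = e^{(n+1)u} on Ω, and set A = (u_{ij̄}), B = (u_{ij}). Then u^{ij̄} ∂_{j̄}( (Ā)⁻¹ · ∂_i B̄ ) = (n+1)·(Ā)⁻¹·B̄ on Ω (summation over i, j). -/
open Complex Matrix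
open scoped ComplexOrder

noncomputable section

/-!
Since `A` is Hermitian, `det Ā = det A`, so `det Ā = exp F` with `F` affine in `u`. Differentiating
`log det Ā = F` in `z̄_q` and then in `z̄_p` gives `tr (∂_{p̄} (Ā⁻¹ ∂_{q̄} Ā)) = ∂_{p̄} ∂_{q̄} F`.

The entries of `∂_{q̄} Ā` and of `∂_i B̄` are third derivatives of `u`: the `(p, i)` entry of the
former and the `(p, q)` entry of the latter are both `∂_i ∂_{p̄} ∂_{q̄} u`. Because
`Ā ∂_{j̄} (Ā⁻¹ N) = ∂_{j̄} N - (∂_{j̄} Ā) Ā⁻¹ N`, interchanging derivatives shows that the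
`(p, q)` entry of `Ā ∂_{j̄} (Ā⁻¹ ∂_i B̄)` is the `(j, i)` entry of `Ā ∂_{p̄} (Ā⁻¹ ∂_{q̄} Ā)`.
Contracting with `u^{ij̄} = (Ā⁻¹)_{ij}` cancels `Ā` and leaves the trace above.
-/

open scoped Topology

section MatrixCalculus

variable {𝕜 E ι : Type*} [NontriviallyNormedField 𝕜] [NormedAddCommGroup E] [NormedSpace 𝕜 E]
  [Fintype ι] {z : E}

theorem differentiableAt_matrix_mul {R : Type*} [NormedRing R] [NormedAlgebra 𝕜 R]
    {M N : E → Matrix ι ι R} (hM : ∀ i j, DifferentiableAt 𝕜 (fun w => M w i j) z)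
    (hN : ∀ i j, DifferentiableAt 𝕜 (fun w => N w i j) z) (i j : ι) :
    DifferentiableAt 𝕜 (fun w => (M w * N w) i j) z := by
  simp only [mul_apply]
  exact DifferentiableAt.fun_sum fun k _ => (hM i k).fun_mul (hN k j)

variable [DecidableEq ι]

theorem hasFDerivAt_matrix_det {R : Type*} [NormedCommRing R] [NormedAlgebra 𝕜 R]
    {M : E → Matrix ι ι R} {M' : Matrix ι ι (E →L[𝕜] R)}
    (hM : ∀ i j, HasFDerivAt (fun w => M w i j) (M' i j) z) :
    HasFDerivAt (fun w => (M w).det) (∑ i, ∑ j, (M z).adjugate i j • M' j i) z := by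
  have leibniz : HasFDerivAt (fun w => (M w).det)
      (∑ σ : Equiv.Perm ι, ((Equiv.Perm.sign σ : ℤ) : R) •
        ∑ i, (∏ k ∈ Finset.univ.erase i, M z (σ k) k) • M' (σ i) i) z := by
    simp only [det_apply']
    exact HasFDerivAt.fun_sum fun σ _ =>
      (HasFDerivAt.finsetProd fun i _ => hM (σ i) i).const_mul _
  refine leibniz.congr_fderiv (ContinuousLinearMap.ext fun v => ?_)
  have cofactor (i : ι) : ∑ j, (M z).adjugate i j * M' j i v =
      ∑ σ : Equiv.Perm ι, ((Equiv.Perm.sign σ : ℤ) : R) *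
        ((∏ k ∈ Finset.univ.erase i, M z (σ k) k) * M' (σ i) i v) := by
    change ((M z).adjugate *ᵥ fun j => M' j i v) i = _
    rw [← cramer_eq_adjugate_mulVec, cramer_apply, det_apply']
    refine Finset.sum_congr rfl fun σ _ => ?_
    rw [← Finset.prod_erase_mul _ _ (Finset.mem_univ i), updateCol_self]
    congr 2
    exact Finset.prod_congr rfl fun k hk => updateCol_ne (Finset.ne_of_mem_erase hk)
  simp only [_root_.sum_apply, _root_.smul_apply, smul_eq_mul, cofactor,
    Finset.mul_sum]
  exact Finset.sum_comm

theorem differentiableAt_matrix_det {R : Type*} [NormedCommRing R] [NormedAlgebra 𝕜 R]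
    {M : E → Matrix ι ι R} (hM : ∀ i j, DifferentiableAt 𝕜 (fun w => M w i j) z) :
    DifferentiableAt 𝕜 (fun w => (M w).det) z :=
  (hasFDerivAt_matrix_det (M' := of fun i j => fderiv 𝕜 (fun w => M w i j) z)
    fun i j => (hM i j).hasFDerivAt).differentiableAt

theorem differentiableAt_matrix_inv_s12 {K : Type*} [NormedField K] [NormedAlgebra 𝕜 K]
    {M : E → Matrix ι ι K} (hM : ∀ i j, DifferentiableAt 𝕜 (fun w => M w i j) z)
    (hdet : (M z).det ≠ 0) (i j : ι) : DifferentiableAt 𝕜 (fun w => (M w)⁻¹ i j) z := by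
  simp only [Matrix.inv_def, Ring.inverse_eq_inv', Matrix.smul_apply, smul_eq_mul, adjugate_apply]
  refine ((differentiableAt_matrix_det hM).fun_inv hdet).fun_mul
    (differentiableAt_matrix_det fun a b => ?_)
  obtain rfl | hne := eq_or_ne a j
  · simp only [updateRow_self, differentiableAt_const]
  · simpa only [updateRow_ne hne] using hM a b

end MatrixCalculus

section ComplexDirections

variable {E : Type*} [NormedAddCommGroup E] [NormedSpace ℝ E] {f : E → ℂ} {z : E}

/-- Evaluation of real-linear functionals `L : E → ℂ`, extended complex-linearly to `E ⊗ ℂ`, at the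
complex direction `v + √-1 w`. Wirtinger derivatives are obtained by applying it to `fderiv ℝ f`,
so that both kinds obey the same rules. -/
def complexEval (v w : E) : (E →L[ℝ] ℂ) →L[ℂ] ℂ where
  toFun L := L v + Complex.I * L w
  map_add' L L' := by simp only [_root_.add_apply]; ring
  map_smul' a L := by simp only [_root_.smul_apply, smul_eq_mul, RingHom.id_apply]; ring
  cont := by fun_prop

theorem complexEval_apply (v w : E) (L : E →L[ℝ] ℂ) :
    complexEval v w L = L v + Complex.I * L w := rfl

theorem contDiffAt_complexEval_fderiv {m n : WithTop ℕ∞} (hf : ContDiffAt ℝ n f z)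
    (hmn : m + 1 ≤ n) (v w : E) : ContDiffAt ℝ m (fun x => complexEval v w (fderiv ℝ f x)) z :=
  ((complexEval v w).restrictScalars ℝ).contDiff.contDiffAt.comp z (hf.fderiv_right hmn)

theorem complexEval_fderiv_comm (hf : ContDiffAt ℝ 2 f z) (v w v' w' : E) :
    complexEval v w (fderiv ℝ (fun x => complexEval v' w' (fderiv ℝ f x)) z) =
      complexEval v' w' (fderiv ℝ (fun x => complexEval v w (fderiv ℝ f x)) z) := by
  have second (a b : E) : fderiv ℝ (fun x => complexEval a b (fderiv ℝ f x)) z =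
      ((complexEval a b).restrictScalars ℝ).comp (fderiv ℝ (fderiv ℝ f) z) :=
    (((complexEval a b).restrictScalars ℝ).hasFDerivAt.comp z
      ((hf.fderiv_right (m := 1) (by norm_num)).differentiableAt one_ne_zero).hasFDerivAt).fderiv
  have symm : IsSymmSndFDerivAt ℝ f z :=
    hf.isSymmSndFDerivAt minSmoothness_of_isRCLikeNormedField.le
  rw [second, second]
  simp only [ContinuousLinearMap.comp_apply, ContinuousLinearMap.coe_restrictScalars',
    complexEval_apply]
  rw [symm v v', symm v w', symm w v', symm w w']
  ring

end ComplexDirections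

section Wirtinger

variable {n : ℕ} {f g : (Fin n → ℂ) → ℂ} {z : Fin n → ℂ}

theorem wdz_eq_complexEval (f : (Fin n → ℂ) → ℂ) (j : Fin n) (z : Fin n → ℂ) :
    wdz f j z =
      complexEval ((1 / 2 : ℝ) • Pi.single j 1) (-(1 / 2 : ℝ) • Pi.single j Complex.I)
        (fderiv ℝ f z) := by
  simp only [wdz, complexEval_apply, map_smul, Complex.real_smul]
  push_cast
  ring

theorem wdzbar_eq_complexEval (f : (Fin n → ℂ) → ℂ) (j : Fin n) (z : Fin n → ℂ) :
    wdzbar f j z =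
      complexEval ((1 / 2 : ℝ) • Pi.single j 1) ((1 / 2 : ℝ) • Pi.single j Complex.I)
        (fderiv ℝ f z) := by
  simp only [wdzbar, complexEval_apply, map_smul, Complex.real_smul]
  push_cast
  ring

theorem contDiffAt_wdz {k m : WithTop ℕ∞} (hf : ContDiffAt ℝ m f z) (hkm : k + 1 ≤ m)
    (j : Fin n) : ContDiffAt ℝ k (wdz f j) z :=
  (contDiffAt_complexEval_fderiv hf hkm _ _).congr_of_eventuallyEq
    (.of_forall (wdz_eq_complexEval f j))

theorem contDiffAt_wdzbar {k m : WithTop ℕ∞} (hf : ContDiffAt ℝ m f z) (hkm : k + 1 ≤ m)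
    (j : Fin n) : ContDiffAt ℝ k (wdzbar f j) z :=
  (contDiffAt_complexEval_fderiv hf hkm _ _).congr_of_eventuallyEq
    (.of_forall (wdzbar_eq_complexEval f j))

theorem wdz_wdzbar_comm (hf : ContDiffAt ℝ 2 f z) (i j : Fin n) :
    wdz (wdzbar f j) i z = wdzbar (wdz f i) j z := by
  simp only [wdz_eq_complexEval, wdzbar_eq_complexEval, funext (wdz_eq_complexEval f i),
    funext (wdzbar_eq_complexEval f j)]
  exact complexEval_fderiv_comm hf _ _ _ _

theorem wdzbar_wdzbar_comm (hf : ContDiffAt ℝ 2 f z) (i j : Fin n) :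
    wdzbar (wdzbar f j) i z = wdzbar (wdzbar f i) j z := by
  simp only [wdzbar_eq_complexEval, funext (wdzbar_eq_complexEval f _)]
  exact complexEval_fderiv_comm hf _ _ _ _

theorem wdzbar_congr (h : f =ᶠ[𝓝 z] g) (j : Fin n) : wdzbar f j z = wdzbar g j z := by
  simp only [wdzbar, h.fderiv_eq]

theorem wdzbar_wdzbar_wdzbar_comm (hf : ContDiffAt ℝ 3 f z) (i j k : Fin n) :
    wdzbar (wdzbar (wdzbar f k) j) i z = wdzbar (wdzbar (wdzbar f i) j) k z := by
  have inner (p : Fin n) : wdzbar (wdzbar f p) j =ᶠ[𝓝 z] wdzbar (wdzbar f j) p :=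
    (hf.eventually (by simp)).mono fun w hw =>
      wdzbar_wdzbar_comm (hw.of_le (by norm_num)) j p
  rw [wdzbar_congr (inner k), wdzbar_congr (inner i),
    wdzbar_wdzbar_comm (contDiffAt_wdzbar hf (by norm_num) j)]

theorem conj_wdz (f : (Fin n → ℂ) → ℂ) (j : Fin n) (z : Fin n → ℂ) :
    starRingEnd ℂ (wdz f j z) = wdzbar (fun w => starRingEnd ℂ (f w)) j z := by
  have fderiv_conj : fderiv ℝ (fun w => starRingEnd ℂ (f w)) z =
      (Complex.conjCLE : ℂ →L[ℝ] ℂ).comp (fderiv ℝ f z) :=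
    Complex.conjCLE.comp_fderiv
  simp [wdz, wdzbar, fderiv_conj, Complex.conj_ofNat]

theorem conj_wdzbar (f : (Fin n → ℂ) → ℂ) (j : Fin n) (z : Fin n → ℂ) :
    starRingEnd ℂ (wdzbar f j z) = wdz (fun w => starRingEnd ℂ (f w)) j z := by
  have h := conj_wdz (fun w => starRingEnd ℂ (f w)) j z
  simp only [Complex.conj_conj] at h
  rw [← h, Complex.conj_conj]

theorem wdzbar_const (a : ℂ) (j : Fin n) (z : Fin n → ℂ) : wdzbar (fun _ => a) j z = 0 := by
  simp [wdzbar_eq_complexEval]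

theorem wdzbar_sum {ι : Type*} {s : Finset ι} {F : ι → (Fin n → ℂ) → ℂ}
    (hF : ∀ i ∈ s, DifferentiableAt ℝ (F i) z) (j : Fin n) :
    wdzbar (fun w => ∑ i ∈ s, F i w) j z = ∑ i ∈ s, wdzbar (F i) j z := by
  simp only [wdzbar_eq_complexEval, fderiv_fun_sum hF, map_sum]

theorem wdzbar_mul (hf : DifferentiableAt ℝ f z) (hg : DifferentiableAt ℝ g z) (j : Fin n) :
    wdzbar (fun w => f w * g w) j z = wdzbar f j z * g z + f z * wdzbar g j z := by
  simp only [wdzbar_eq_complexEval, fderiv_fun_mul hf hg, map_add, map_smul, smul_eq_mul]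
  ring

theorem wdzbar_const_add (a : ℂ) (f : (Fin n → ℂ) → ℂ) (j : Fin n) (z : Fin n → ℂ) :
    wdzbar (fun w => a + f w) j z = wdzbar f j z := by
  simp only [wdzbar_eq_complexEval, fderiv_const_add]

theorem wdzbar_const_mul (a : ℂ) (hf : DifferentiableAt ℝ f z) (j : Fin n) :
    wdzbar (fun w => a * f w) j z = a * wdzbar f j z := by
  rw [wdzbar_mul (differentiableAt_const a) hf, wdzbar_const, zero_mul, zero_add]

theorem wdzbar_cexp (hf : DifferentiableAt ℝ f z) (j : Fin n) :
    wdzbar (fun w => Complex.exp (f w)) j z = Complex.exp (f z) * wdzbar f j z := by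
  simp only [wdzbar_eq_complexEval, hf.hasFDerivAt.cexp.fderiv, map_smul, smul_eq_mul]

end Wirtinger

section MatrixWirtinger

variable {n : ℕ} {M N : (Fin n → ℂ) → Matrix (Fin n) (Fin n) ℂ} {z : Fin n → ℂ}

theorem mwdzbar_congr (h : M =ᶠ[𝓝 z] N) (j : Fin n) : mwdzbar M j z = mwdzbar N j z :=
  Matrix.ext fun p q => wdzbar_congr (h.fun_comp (· p q)) j

theorem mwdzbar_mul (hM : ∀ p q, DifferentiableAt ℝ (fun w => M w p q) z)
    (hN : ∀ p q, DifferentiableAt ℝ (fun w => N w p q) z) (j : Fin n) :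
    mwdzbar (fun w => M w * N w) j z = mwdzbar M j z * N z + M z * mwdzbar N j z := by
  ext p q
  simp only [mwdzbar, of_apply, mul_apply, Matrix.add_apply,
    wdzbar_sum fun k _ => (hM p k).fun_mul (hN k q), wdzbar_mul (hM p _) (hN _ q),
    Finset.sum_add_distrib]

theorem wdzbar_trace (hM : ∀ p q, DifferentiableAt ℝ (fun w => M w p q) z) (j : Fin n) :
    wdzbar (fun w => (M w).trace) j z = (mwdzbar M j z).trace := by
  simp only [trace, diag_apply, wdzbar_sum fun k _ => hM k k, mwdzbar, of_apply]

theorem mwdzbar_inv (hM : ∀ p q, DifferentiableAt ℝ (fun w => M w p q) z)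
    (hdet : (M z).det ≠ 0) (j : Fin n) :
    mwdzbar (fun w => (M w)⁻¹) j z = -((M z)⁻¹ * mwdzbar M j z * (M z)⁻¹) := by
  have inv_mul : (fun w => (M w)⁻¹ * M w) =ᶠ[𝓝 z] fun _ => 1 :=
    ((differentiableAt_matrix_det hM).continuousAt.eventually_ne hdet).mono fun w hw =>
      nonsing_inv_mul _ hw.isUnit
  have leibniz : mwdzbar (fun w => (M w)⁻¹) j z * M z + (M z)⁻¹ * mwdzbar M j z = 0 := by
    rw [← mwdzbar_mul (differentiableAt_matrix_inv_s12 hM hdet) hM, mwdzbar_congr inv_mul]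
    exact Matrix.ext fun p q => wdzbar_const _ j z
  rw [← neg_mul, ← eq_neg_of_add_eq_zero_left leibniz, mul_nonsing_inv_cancel_right _ _ hdet.isUnit]

theorem mul_mwdzbar_inv_mul (hM : ∀ p q, DifferentiableAt ℝ (fun w => M w p q) z)
    (hN : ∀ p q, DifferentiableAt ℝ (fun w => N w p q) z) (hdet : (M z).det ≠ 0) (j : Fin n) :
    M z * mwdzbar (fun w => (M w)⁻¹ * N w) j z =
      mwdzbar N j z - mwdzbar M j z * (M z)⁻¹ * N z := by
  rw [mwdzbar_mul (differentiableAt_matrix_inv_s12 hM hdet) hN, mwdzbar_inv hM hdet, mul_add,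
    mul_nonsing_inv_cancel_left _ _ hdet.isUnit, neg_mul, mul_neg, Matrix.mul_assoc (M z)⁻¹,
    Matrix.mul_assoc (M z)⁻¹, mul_nonsing_inv_cancel_left _ _ hdet.isUnit, neg_add_eq_sub]

theorem wdzbar_det (hM : ∀ p q, DifferentiableAt ℝ (fun w => M w p q) z)
    (hdet : (M z).det ≠ 0) (j : Fin n) :
    wdzbar (fun w => (M w).det) j z = (M z).det * ((M z)⁻¹ * mwdzbar M j z).trace := by
  have jacobi := hasFDerivAt_matrix_det (M' := of fun p q => fderiv ℝ (fun w => M w p q) z)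
    fun p q => (hM p q).hasFDerivAt
  have adjugate_eq : (M z).adjugate = (M z).det • (M z)⁻¹ := by
    rw [Matrix.inv_def, smul_smul, Ring.mul_inverse_cancel _ hdet.isUnit, one_smul]
  rw [wdzbar_eq_complexEval, jacobi.fderiv, ← smul_eq_mul, ← trace_smul, ← smul_mul, ← adjugate_eq]
  simp only [map_sum, map_smul, of_apply, smul_eq_mul, trace, diag_apply, mul_apply, mwdzbar,
    wdzbar_eq_complexEval]

theorem trace_inv_mul_mwdzbar_of_det_eq_cexp {F : (Fin n → ℂ) → ℂ}
    (hM : ∀ p q, DifferentiableAt ℝ (fun w => M w p q) z) (hF : DifferentiableAt ℝ F z)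
    (h : ∀ᶠ w in 𝓝 z, (M w).det = Complex.exp (F w)) (j : Fin n) :
    ((M z)⁻¹ * mwdzbar M j z).trace = wdzbar F j z := by
  have hdet : (M z).det ≠ 0 := h.self_of_nhds ▸ Complex.exp_ne_zero _
  refine mul_left_cancel₀ hdet ?_
  rw [← wdzbar_det hM hdet, wdzbar_congr h, wdzbar_cexp hF, h.self_of_nhds]

theorem trace_mwdzbar_inv_mul_mwdzbar_of_det_eq_cexp {F : (Fin n → ℂ) → ℂ}
    (hM : ∀ p q, ContDiffAt ℝ 2 (fun w => M w p q) z) (hF : ContDiffAt ℝ 1 F z)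
    (h : ∀ᶠ w in 𝓝 z, (M w).det = Complex.exp (F w)) (i j : Fin n) :
    (mwdzbar (fun w => (M w)⁻¹ * mwdzbar M j w) i z).trace = wdzbar (wdzbar F j) i z := by
  have hdet : (M z).det ≠ 0 := h.self_of_nhds ▸ Complex.exp_ne_zero _
  have diffInv :=
    differentiableAt_matrix_inv_s12 (fun p q => (hM p q).differentiableAt two_ne_zero) hdet
  have diffDM (p q : Fin n) : DifferentiableAt ℝ (fun w => mwdzbar M j w p q) z :=
    (contDiffAt_wdzbar (hM p q) one_add_one_eq_two.le j).differentiableAt one_ne_zero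
  have first : (fun w => ((M w)⁻¹ * mwdzbar M j w).trace) =ᶠ[𝓝 z] wdzbar F j := by
    have hM' : ∀ᶠ w in 𝓝 z, ∀ p q, ContDiffAt ℝ 2 (fun w => M w p q) w := by
      simpa only [Filter.eventually_all] using fun p q => (hM p q).eventually (by simp)
    filter_upwards [hM', hF.eventually (by simp), h.eventually_nhds] with w hMw hFw hw
    exact trace_inv_mul_mwdzbar_of_det_eq_cexp (fun p q => (hMw p q).differentiableAt two_ne_zero)
      (hFw.differentiableAt one_ne_zero) hw j
  rw [← wdzbar_congr first, wdzbar_trace (differentiableAt_matrix_mul diffInv diffDM)]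

end MatrixWirtinger

section Hessian

variable {n : ℕ} {u : (Fin n → ℂ) → ℝ} {z : Fin n → ℂ}

/-- The conjugate complex Hessian `Ā`, whose `(p, q)` entry is `∂_{p̄} ∂_q u`, as a matrix-valued
function. -/
abbrev conjHessA (u : (Fin n → ℂ) → ℝ) : (Fin n → ℂ) → Matrix (Fin n) (Fin n) ℂ :=
  fun w => mconj (hessA u w)

/-- The matrix `B̄`, whose `(p, q)` entry is `∂_{p̄} ∂_{q̄} u`, as a matrix-valued function. -/
abbrev conjHessB (u : (Fin n → ℂ) → ℝ) : (Fin n → ℂ) → Matrix (Fin n) (Fin n) ℂ :=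
  fun w => mconj (hessB u w)

theorem contDiffAt_cplx {m : WithTop ℕ∞} (hu : ContDiffAt ℝ m u z) : ContDiffAt ℝ m (cplx u) z :=
  Complex.ofRealCLM.contDiff.contDiffAt.comp z hu

theorem conjHessA_apply (u : (Fin n → ℂ) → ℝ) (z : Fin n → ℂ) (p q : Fin n) :
    conjHessA u z p q = wdzbar (wdz (cplx u) q) p z := by
  simp only [conjHessA, mconj, hessA, map_apply, of_apply, conj_wdz, conj_wdzbar, cplx,
    Complex.conj_ofReal]
  rfl

theorem conjHessB_apply (u : (Fin n → ℂ) → ℝ) (z : Fin n → ℂ) (p q : Fin n) :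
    conjHessB u z p q = wdzbar (wdzbar (cplx u) q) p z := by
  simp only [conjHessB, mconj, hessB, map_apply, of_apply, conj_wdz, cplx, Complex.conj_ofReal]
  rfl

theorem conjHessA_eq_transpose (hu : ContDiffAt ℝ 2 u z) :
    conjHessA u z = (hessA u z)ᵀ := by
  ext p q
  rw [conjHessA_apply, ← wdz_wdzbar_comm (contDiffAt_cplx hu)]
  rfl

theorem uInv_eq_inv_conjHessA (hu : ContDiffAt ℝ 2 u z) (i j : Fin n) :
    uInv u z i j = (conjHessA u z)⁻¹ i j := by
  rw [conjHessA_eq_transpose hu, ← transpose_nonsing_inv]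
  rfl

theorem contDiffAt_conjHessA {m : WithTop ℕ∞} (hu : ContDiffAt ℝ (m + 1 + 1) u z)
    (p q : Fin n) : ContDiffAt ℝ m (fun w => conjHessA u w p q) z := by
  simp only [conjHessA_apply]
  exact contDiffAt_wdzbar (contDiffAt_wdz (contDiffAt_cplx hu) le_rfl q) le_rfl p

theorem contDiffAt_conjHessB {m : WithTop ℕ∞} (hu : ContDiffAt ℝ (m + 1 + 1) u z)
    (p q : Fin n) : ContDiffAt ℝ m (fun w => conjHessB u w p q) z := by
  simp only [conjHessB_apply]
  exact contDiffAt_wdzbar (contDiffAt_wdzbar (contDiffAt_cplx hu) le_rfl q) le_rfl p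

theorem mwdzbar_conjHessA_apply (u : (Fin n → ℂ) → ℝ) (z : Fin n → ℂ) (j p q : Fin n) :
    mwdzbar (conjHessA u) j z p q = wdzbar (wdzbar (wdz (cplx u) q) p) j z := by
  simp only [mwdzbar, of_apply, conjHessA_apply]

theorem mwdzbar_conjHessA_comm (hu : ContDiffAt ℝ 3 u z) (j p q : Fin n) :
    mwdzbar (conjHessA u) j z p q = mwdzbar (conjHessA u) p z j q := by
  rw [mwdzbar_conjHessA_apply, mwdzbar_conjHessA_apply,
    wdzbar_wdzbar_comm (contDiffAt_wdz (contDiffAt_cplx hu) (by norm_num) q)]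

theorem mwdz_conjHessB_apply (hu : ContDiffAt ℝ 3 u z) (i p q : Fin n) :
    mwdz (conjHessB u) i z p q = mwdzbar (conjHessA u) q z p i := by
  have hU := contDiffAt_cplx hu
  have inner : wdz (wdzbar (cplx u) q) i =ᶠ[𝓝 z] wdzbar (wdz (cplx u) i) q :=
    (hU.eventually (by simp)).mono fun w hw => wdz_wdzbar_comm (hw.of_le (by norm_num)) i q
  simp only [mwdz, of_apply, conjHessB_apply]
  rw [wdz_wdzbar_comm (contDiffAt_wdzbar hU (by norm_num) q), wdzbar_congr inner,
    mwdzbar_conjHessA_apply]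
  exact wdzbar_wdzbar_comm (contDiffAt_wdz hU (by norm_num) i) p q

theorem mwdzbar_mwdz_conjHessB_apply (hu : ContDiffAt ℝ 4 u z) (i j p q : Fin n) :
    mwdzbar (mwdz (conjHessB u) i) j z p q =
      mwdzbar (mwdzbar (conjHessA u) q) p z j i := by
  have third : (fun w => mwdz (conjHessB u) i w p q) =ᶠ[𝓝 z]
      wdzbar (wdzbar (wdz (cplx u) i) p) q :=
    (hu.eventually (by simp)).mono fun w hw =>
      (mwdz_conjHessB_apply (hw.of_le (by norm_num)) i p q).trans
        (mwdzbar_conjHessA_apply u w q p i)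
  have hdU : ContDiffAt ℝ 3 (wdz (cplx u) i) z :=
    contDiffAt_wdz (contDiffAt_cplx hu) (by norm_num) i
  calc mwdzbar (mwdz (conjHessB u) i) j z p q
    _ = wdzbar (wdzbar (wdzbar (wdz (cplx u) i) p) q) j z := wdzbar_congr third j
    _ = wdzbar (wdzbar (wdzbar (wdz (cplx u) i) j) q) p z := wdzbar_wdzbar_wdzbar_comm hdU j q p
    _ = mwdzbar (mwdzbar (conjHessA u) q) p z j i :=
      congrArg (wdzbar · p z) (funext fun w => (mwdzbar_conjHessA_apply u w q j i).symm)

theorem mwdzbar_conjHessA_mul_mul_mwdz_conjHessB_apply (hu : ContDiffAt ℝ 3 u z)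
    (G : Matrix (Fin n) (Fin n) ℂ) (i j p q : Fin n) :
    (mwdzbar (conjHessA u) j z * G * mwdz (conjHessB u) i z) p q =
      (mwdzbar (conjHessA u) p z * G * mwdzbar (conjHessA u) q z) j i := by
  simp only [mul_apply, mwdz_conjHessB_apply hu, mwdzbar_conjHessA_comm hu j p]

theorem conjHessA_mul_mwdzbar_inv_mul_mwdz_conjHessB_apply (hu : ContDiffAt ℝ 4 u z)
    (hdet : (conjHessA u z).det ≠ 0) (i j p q : Fin n) :
    (conjHessA u z * mwdzbar (fun w => (conjHessA u w)⁻¹ * mwdz (conjHessB u) i w) j z) p q =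
      (conjHessA u z *
        mwdzbar (fun w => (conjHessA u w)⁻¹ * mwdzbar (conjHessA u) q w) p z) j i := by
  have hu' : ContDiffAt ℝ (2 + 1 + 1) u z := hu.of_le (by norm_num)
  have diffA (a b : Fin n) : DifferentiableAt ℝ (fun w => conjHessA u w a b) z :=
    (contDiffAt_conjHessA hu' a b).differentiableAt two_ne_zero
  have diffDA (a b : Fin n) : DifferentiableAt ℝ (fun w => mwdzbar (conjHessA u) q w a b) z :=
    (contDiffAt_wdzbar (contDiffAt_conjHessA hu' a b) one_add_one_eq_two.le q).differentiableAt
      one_ne_zero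
  have diffDB (a b : Fin n) : DifferentiableAt ℝ (fun w => mwdz (conjHessB u) i w a b) z :=
    (contDiffAt_wdz (contDiffAt_conjHessB hu' a b) one_add_one_eq_two.le i).differentiableAt
      one_ne_zero
  rw [mul_mwdzbar_inv_mul diffA diffDB hdet, mul_mwdzbar_inv_mul diffA diffDA hdet,
    Matrix.sub_apply, Matrix.sub_apply, mwdzbar_mwdz_conjHessB_apply hu,
    mwdzbar_conjHessA_mul_mul_mwdz_conjHessB_apply (hu.of_le (by norm_num))]

theorem sum_uInv_smul_mwdzbar_of_det_eq_cexp (hu : ContDiffAt ℝ 4 u z) {F : (Fin n → ℂ) → ℂ}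
    (hF : ContDiffAt ℝ 1 F z) (h : ∀ᶠ w in 𝓝 z, (hessA u w).det = Complex.exp (F w)) :
    ∑ i, ∑ j, uInv u z i j •
        mwdzbar (fun w => (conjHessA u w)⁻¹ * mwdz (conjHessB u) i w) j z =
      (conjHessA u z)⁻¹ * of fun p q => wdzbar (wdzbar F q) p z := by
  have hu2 : ContDiffAt ℝ 2 u z := hu.of_le (by norm_num)
  have hconj : ∀ᶠ w in 𝓝 z, (conjHessA u w).det = Complex.exp (F w) := by
    filter_upwards [h, hu2.eventually (by simp)] with w hw huw
    rw [conjHessA_eq_transpose huw, det_transpose, hw]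
  have hdet : (conjHessA u z).det ≠ 0 := hconj.self_of_nhds ▸ Complex.exp_ne_zero _
  have hA2 := contDiffAt_conjHessA (m := 2) (hu.of_le (by norm_num))
  rw [← nonsing_inv_mul_cancel_left _ (∑ i, ∑ j, _ • _) hdet.isUnit]
  congr 1
  ext p q
  set Y := mwdzbar (fun w => (conjHessA u w)⁻¹ * mwdzbar (conjHessA u) q w) p z with hY
  calc (conjHessA u z * ∑ i, ∑ j, uInv u z i j •
        mwdzbar (fun w => (conjHessA u w)⁻¹ * mwdz (conjHessB u) i w) j z) p q
    _ = ∑ i, ∑ j, (conjHessA u z)⁻¹ i j * (conjHessA u z * Y) j i := by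
      simp only [Matrix.mul_sum, Matrix.mul_smul, Matrix.sum_apply, Matrix.smul_apply, smul_eq_mul,
        uInv_eq_inv_conjHessA hu2, conjHessA_mul_mwdzbar_inv_mul_mwdz_conjHessB_apply hu hdet, hY]
    _ = ((conjHessA u z)⁻¹ * (conjHessA u z * Y)).trace := by
      simp only [trace, diag_apply, mul_apply (M := (conjHessA u z)⁻¹)]
    _ = Y.trace := by rw [nonsing_inv_mul_cancel_left _ _ hdet.isUnit]
    _ = wdzbar (wdzbar F q) p z :=
      trace_mwdzbar_inv_mul_mwdzbar_of_det_eq_cexp hA2 hF hconj p q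

end Hessian

theorem trace_dbar_AinvbarDBbar_general {n : ℕ} {u : (Fin n → ℂ) → ℝ} {z : Fin n → ℂ}
    (hu : ContDiffAt ℝ 4 u z) {c κ : ℂ} (hc : c ≠ 0)
    (hMA : ∀ᶠ w in 𝓝 z, (hessA u w).det = c * Complex.exp (κ * u w)) :
    ∑ i, ∑ j, uInv u z i j •
        mwdzbar (fun w => (mconj (hessA u w))⁻¹ * mwdz (fun w' => mconj (hessB u w')) i w) j z =
      κ • ((mconj (hessA u z))⁻¹ * mconj (hessB u z)) := by
  have hU : ContDiffAt ℝ 4 (cplx u) z := contDiffAt_cplx hu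
  have hexp : ∀ᶠ w in 𝓝 z, (hessA u w).det = Complex.exp (Complex.log c + κ * cplx u w) := by
    filter_upwards [hMA] with w hw
    rw [hw, Complex.exp_add, Complex.exp_log hc, cplx]
  rw [sum_uInv_smul_mwdzbar_of_det_eq_cexp hu
    (contDiffAt_const.add (contDiffAt_const.mul (hU.of_le (by norm_num)))) hexp, ← Matrix.mul_smul]
  congr 1
  ext p q
  have hgrad : wdzbar (fun w => Complex.log c + κ * cplx u w) q =ᶠ[𝓝 z]
      fun w => κ * wdzbar (cplx u) q w := by
    filter_upwards [hU.eventually (by simp)] with w hw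
    rw [wdzbar_const_add, wdzbar_const_mul κ (hw.differentiableAt four_ne_zero)]
  have hdU : ContDiffAt ℝ 3 (wdzbar (cplx u) q) z := contDiffAt_wdzbar hU (by norm_num) q
  rw [of_apply, wdzbar_congr hgrad, wdzbar_const_mul κ (hdU.differentiableAt three_ne_zero),
    ← conjHessB_apply]
  rfl

theorem trace_dbar_AinvbarDBbar (n : ℕ) (Ω : Set (Fin n → ℂ)) (hΩ : IsOpen Ω)
    (u : (Fin n → ℂ) → ℝ) (hu : ContDiffOn ℝ (⊤ : ℕ∞) u Ω)
    (hpsh : ∀ z ∈ Ω, (hessA u z).PosDef)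
    (hKE : ∀ z ∈ Ω, (hessA u z).det = (Real.exp ((n + 1) * u z) : ℂ)) :
    ∀ z ∈ Ω,
      ∑ i, ∑ j, uInv u z i j •
          mwdzbar (fun w => (mconj (hessA u w))⁻¹ *
            mwdz (fun w' => mconj (hessB u w')) i w) j z
        = ((n : ℂ) + 1) • ((mconj (hessA u z))⁻¹ * mconj (hessB u z)) := fun z hz =>
  trace_dbar_AinvbarDBbar_general
    ((hu.of_le (WithTop.coe_le_coe.2 (le_top : (4 : ℕ∞) ≤ ⊤))).contDiffAt (hΩ.mem_nhds hz))
    one_ne_zero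
    (by filter_upwards [hΩ.mem_nhds hz] with w hw using by simpa using hKE w hw)

end
end
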